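/- arXiv:math/0505176 — 5 statements merged into one kernel-verified Lean document; each statement's English description precedes it below -/
import Mathlib

section
/- Let E be a normed space and (g_n) a bounded sequence in E'. If no normalized block sequence of (g_n) converges pointwise to 0 on E (equivalently on the unit ball), then E contains an asymptotically isometric copy of ℓ¹(ℕ). (Assume Dependent Choices.) -/
open Filter

/-!
Measure a sequence `f` of functionals by its asymptotic norm `sup_{‖x‖ ≤ 1} limsup |f n x|`. Passing
to a block sequence does not increase it, and countably many successive refinements have a common
diagonal refinement, so some block sequence `u` is regular: no further refinement lowers its
asymptotic norm `r`. Not being pointwise null means `r > 0`. Now split `u` into `d` subsequences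
and average them with arbitrary signs: the average still has norm at least `r`, although each term
is asymptotically bounded by `r`. Hence a single `x` in the unit ball makes all `d` signed terms
almost equal to `r` at once. Taking one subsequence for each sign pattern already realised on
`a 0, …, a (n - 1)`, this produces `a n` such that every sign pattern is almost realised on
`a 0, …, a n`, and testing against these patterns bounds `‖∑ lam i • a i‖` from below.
-/

namespace HaglerJohnson

theorem exists_seq_forall_prefix {α : Type*} {Q : ∀ n : ℕ, (Fin n → α) → α → Prop}
    (h : ∀ n x, ∃ y, Q n x y) : ∃ a : ℕ → α, ∀ n, Q n (fun i => a i) (a n) := by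
  choose Y hY using h
  let a : ℕ → α := Nat.strongRec fun n ih => Y n fun i => ih i i.2
  have ha (n : ℕ) : a n = Y n fun i => a i := Nat.strongRec_eq _ n
  exact ⟨a, fun n => (ha n).symm ▸ hY n _⟩

theorem exists_seq_forall_prefix_of_snoc {α : Type*} {P : ∀ n : ℕ, (Fin n → α) → Prop}
    (h₀ : P 0 Fin.elim0) (hsnoc : ∀ n x, P n x → ∃ y, P (n + 1) (Fin.snoc x y)) :
    ∃ a : ℕ → α, ∀ n, P n fun i => a i := by
  obtain ⟨y₀, -⟩ := hsnoc 0 _ h₀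
  obtain ⟨a, ha⟩ := exists_seq_forall_prefix
    (Q := fun n x y => P n x → P (n + 1) (Fin.snoc x y)) fun n x => by
      by_cases hx : P n x
      · exact (hsnoc n x hx).imp fun _ hy _ => hy
      · exact ⟨y₀, fun hx' => absurd hx' hx⟩
  refine ⟨a, fun n => ?_⟩
  induction n with
  | zero => rwa [Subsingleton.elim (fun i : Fin 0 => a i) Fin.elim0]
  | succ n ih =>
    rw [← Fin.snoc_init_self fun i : Fin (n + 1) => a i]
    exact ha n ih

theorem exists_le_forall_le_apply_le {α : Type*} [Preorder α]
    (hα : ∀ u : ℕ → α, Antitone u → BddBelow (Set.range u)) {f : α → ℝ} (hf : Monotone f)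
    (hf_bdd : BddBelow (Set.range f)) (a₀ : α) : ∃ a ≤ a₀, ∀ b ≤ a, f a ≤ f b := by
  have exists_almost_min (n : ℕ) (u : α) : ∃ z ≤ u, ∀ b ≤ u, f z < f b + 1 / (n + 1) := by
    obtain ⟨_, ⟨z, hz, rfl⟩, hlt⟩ := exists_lt_of_csInf_lt (Set.nonempty_Iic.image f)
      (lt_add_of_pos_right (sInf (f '' Set.Iic u)) (Nat.one_div_pos_of_nat (n := n) (α := ℝ)))
    refine ⟨z, hz, fun b hb => hlt.trans_le ?_⟩
    gcongr
    exact csInf_le (hf_bdd.mono (Set.image_subset_range f _)) (Set.mem_image_of_mem f hb)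
  choose next next_le next_lt using exists_almost_min
  let u : ℕ → α := fun n => Nat.rec a₀ next n
  obtain ⟨a, ha⟩ := hα u (antitone_nat_of_succ_le fun n => next_le n (u n))
  have ha_le (n : ℕ) : a ≤ u n := ha (Set.mem_range_self n)
  refine ⟨a, ha_le 0, fun b hb => ?_⟩
  have hlim : Tendsto (fun n : ℕ => f b + 1 / ((n : ℝ) + 1)) atTop (nhds (f b)) := by
    simpa using (tendsto_one_div_add_atTop_nhds_zero_nat (𝕜 := ℝ)).const_add (f b)
  exact ge_of_tendsto' hlim fun n =>
    (hf (ha_le (n + 1))).trans (next_lt n (u n) b (hb.trans (ha_le n))).le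

theorem exists_injective_forall_of_forall_frequently {κ : Type*} [Countable κ]
    {P : κ → ℕ → Prop} (h : ∀ a, ∃ᶠ j in atTop, P a j) :
    ∃ p : κ → ℕ, p.Injective ∧ ∀ a, P a (p a) := by
  obtain ⟨e, he⟩ := exists_injective_nat κ
  obtain ⟨q, hq, hqP⟩ := extraction_forall_of_frequently
    (P := fun k j => ∀ a, e a = k → P a j) fun k => by
      by_cases hk : ∃ a, e a = k
      · obtain ⟨a, rfl⟩ := hk
        exact (h a).mono fun j hj b hb => he hb ▸ hj
      · exact Frequently.of_forall fun j a ha => absurd ⟨a, ha⟩ hk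
  exact ⟨q ∘ e, hq.injective.comp he, fun a => hqP (e a) a rfl⟩

theorem sum_sub_card_sub_one_mul_le {κ : Type*} [Fintype κ] {a : κ → ℝ} {M : ℝ}
    (ha : ∀ t, a t ≤ M) (t : κ) : ∑ t', a t' - (Fintype.card κ - 1) * M ≤ a t := by
  classical
  have hrest : ∑ t' ∈ Finset.univ.erase t, a t' ≤ (Fintype.card κ - 1) * M := by
    have := Finset.sum_le_card_nsmul (Finset.univ.erase t) a M fun t' _ => ha t'
    rwa [nsmul_eq_mul, Finset.cast_card_erase_of_mem (Finset.mem_univ t), Finset.card_univ] at this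
  linarith [Finset.add_sum_erase Finset.univ a (Finset.mem_univ t)]

section AbsConvex

variable {V : Type*} [AddCommGroup V] [Module ℝ V]

theorem sum_smul_mem_of_absConvex {S : Set V} (hS : AbsConvex ℝ S) {κ : Type*} {A : Finset κ}
    {c : κ → ℝ} {v : κ → V} (hc : ∑ t ∈ A, |c t| = 1) (hv : ∀ t ∈ A, v t ∈ S) :
    ∑ t ∈ A, c t • v t ∈ S := by
  have hsign (t : κ) : |c t| • (SignType.sign (c t) : ℝ) • v t = c t • v t := by
    rw [smul_smul, abs_mul_sign]
  simp only [← hsign]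
  refine hS.2.sum_mem (fun _ _ => abs_nonneg _) hc fun t ht => hS.1.smul_mem ?_ (hv t ht)
  rcases SignType.sign (c t) with _ | _ | _ <;> simp

theorem absConvex_setOf_abs_le (φ : Module.Dual ℝ V) (c : ℝ) : AbsConvex ℝ {v | |φ v| ≤ c} := by
  have : {v | |φ v| ≤ c} = φ.toSeminorm.closedBall 0 c := by ext; simp
  rw [this]
  exact ⟨Seminorm.balanced_closedBall_zero _ _, Seminorm.convex_closedBall _ _ _⟩

end AbsConvex

theorem finsupp_sum_sum_of_disjoint {ι κ M N : Type*} [AddCommMonoid M] [AddCommMonoid N]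
    {v : κ → ι →₀ M} (hv : Pairwise fun s t => Disjoint (v s).support (v t).support)
    (A : Finset κ) (h : ι → M → N) : (∑ t ∈ A, v t).sum h = ∑ t ∈ A, (v t).sum h := by
  classical
  induction A using Finset.induction_on with
  | empty => simp
  | insert t A ht ih =>
    have hdisj : Disjoint (v t).support (∑ s ∈ A, v s).support := by
      rw [Finsupp.support_sum_eq_biUnion A fun s t hst => hv hst, Finset.disjoint_biUnion_right]
      exact fun s hs => hv (ne_of_mem_of_not_mem hs ht).symm
    rw [Finset.sum_insert ht, Finset.sum_insert ht, Finsupp.sum_add_index_of_disjoint hdisj, ih]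

section AsymptoticNorm

variable {E J : Type*} [SeminormedAddCommGroup E] [NormedSpace ℝ E] {l : Filter J}
  {f : J → Module.Dual ℝ E}

/-- The constants `r` such that the family `f` is asymptotically bounded by `r`: for each `x`,
`|f j x| ≤ r * ‖x‖` holds eventually along `l`, with a threshold that may depend on `x`. -/
def asymptoticBounds (l : Filter J) (f : J → Module.Dual ℝ E) : Set ℝ :=
  {r | 0 ≤ r ∧ ∀ x, ∀ᶠ j in l, |f j x| ≤ r * ‖x‖}

/-- The asymptotic norm of the family `f`, that is `sup_{‖x‖ ≤ 1} limsup |f j x|`, encoded as the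
infimum of the asymptotic bounds. It takes the junk value `0` when there is no bound at all. -/
noncomputable def asymptoticNorm (l : Filter J) (f : J → Module.Dual ℝ E) : ℝ :=
  sInf (asymptoticBounds l f)

theorem bddBelow_asymptoticBounds : BddBelow (asymptoticBounds l f) := ⟨0, fun _ hr => hr.1⟩

theorem asymptoticNorm_nonneg : 0 ≤ asymptoticNorm l f := Real.sInf_nonneg fun _ hr => hr.1

theorem mem_asymptoticBounds_of_asymptoticNorm_lt (hf : (asymptoticBounds l f).Nonempty) {r : ℝ}
    (hr : asymptoticNorm l f < r) : r ∈ asymptoticBounds l f := by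
  obtain ⟨s, ⟨hs₀, hs⟩, hsr⟩ := exists_lt_of_csInf_lt hf hr
  exact ⟨hs₀.trans hsr.le, fun x => (hs x).mono fun j hj => hj.trans (by gcongr)⟩

theorem nonempty_asymptoticBounds_of_asymptoticNorm_pos (hf : 0 < asymptoticNorm l f) :
    (asymptoticBounds l f).Nonempty := by
  by_contra h
  rw [asymptoticNorm, Set.not_nonempty_iff_eq_empty.1 h, Real.sInf_empty] at hf
  exact hf.false

theorem exists_frequently_lt_of_lt_asymptoticNorm {r : ℝ} (hr₀ : 0 ≤ r)
    (hr : r < asymptoticNorm l f) : ∃ x, ‖x‖ ≤ 1 ∧ ∃ᶠ j in l, r < f j x := by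
  have hr_notMem : r ∉ asymptoticBounds l f := notMem_of_lt_csInf hr bddBelow_asymptoticBounds
  obtain ⟨x, hx⟩ : ∃ x, ∃ᶠ j in l, r * ‖x‖ < |f j x| := by
    simpa [asymptoticBounds, hr₀, not_eventually] using hr_notMem
  have hx₀ : 0 < ‖x‖ := by
    refine (norm_nonneg x).lt_of_ne' fun hx₀ => ?_
    obtain ⟨s, -, hs⟩ := nonempty_asymptoticBounds_of_asymptoticNorm_pos (hr₀.trans_lt hr)
    obtain ⟨j, hj, hj'⟩ := (hx.and_eventually (hs x)).exists
    rw [hx₀, mul_zero] at hj hj'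
    exact hj'.not_gt hj
  simp only [lt_abs, frequently_or_distrib] at hx
  suffices ∀ y : E, ‖y‖ = ‖x‖ → (∃ᶠ j in l, r * ‖x‖ < f j y) →
      ∃ z, ‖z‖ ≤ 1 ∧ ∃ᶠ j in l, r < f j z by
    rcases hx with hx | hx
    · exact this x rfl hx
    · exact this (-x) (norm_neg x) (by simpa only [map_neg] using hx)
  intro y hyx hy
  refine ⟨‖x‖⁻¹ • y, by rw [norm_smul, norm_inv, norm_norm, hyx, inv_mul_cancel₀ hx₀.ne'], ?_⟩
  refine hy.mono fun j hj => ?_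
  rwa [map_smul, smul_eq_mul, inv_mul_eq_div, lt_div_iff₀ hx₀]

theorem tendsto_zero_of_asymptoticNorm_eq_zero (hf : (asymptoticBounds l f).Nonempty)
    (h : asymptoticNorm l f = 0) (x : E) : Tendsto (fun j => f j x) l (nhds 0) := by
  rw [Metric.tendsto_nhds]
  intro ε hε
  have hmem : ε / (‖x‖ + 1) ∈ asymptoticBounds l f :=
    mem_asymptoticBounds_of_asymptoticNorm_lt hf (h.trans_lt (by positivity))
  filter_upwards [hmem.2 x] with j hj
  rw [dist_zero_right, Real.norm_eq_abs]
  refine hj.trans_lt ?_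
  rw [div_mul_eq_mul_div, div_lt_iff₀ (by positivity)]
  nlinarith

/-- Every sign pattern `s` is realised by `f` on the family `x` frequently along `l`, with values of
modulus at least `c i`. This is the property of the Rademacher functions, in quantitative form,
which makes `x` dominate a weighted `ℓ¹` norm. -/
def SignIndependent {κ : Type*} (l : Filter J) (f : J → Module.Dual ℝ E) (c : κ → ℝ)
    (x : κ → E) : Prop :=
  ∀ s : κ → ℤˣ, ∃ᶠ j in l, ∀ i, c i ≤ (s i : ℤ) * f j (x i)

theorem exists_intUnit_mul_abs_eq (r : ℝ) : ∃ s : ℤˣ, ((s : ℤ) : ℝ) * |r| = r := by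
  rcases abs_choice r with h | h
  · exact ⟨1, by simp [h]⟩
  · exact ⟨-1, by simp [h]⟩

theorem SignIndependent.sum_mul_abs_le {κ : Type*} [Fintype κ] {c : κ → ℝ} {x : κ → E}
    (hx : SignIndependent l f c x) (hf : (asymptoticBounds l f).Nonempty) (lam : κ → ℝ) :
    ∑ i, c i * |lam i| ≤ asymptoticNorm l f * ‖∑ i, lam i • x i‖ := by
  choose s hs using fun i => exists_intUnit_mul_abs_eq (lam i)
  have le_of_lt (r : ℝ) (hr : asymptoticNorm l f < r) :
      ∑ i, c i * |lam i| ≤ r * ‖∑ i, lam i • x i‖ := by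
    obtain ⟨j, hj, hjr⟩ := ((hx s).and_eventually
      ((mem_asymptoticBounds_of_asymptoticNorm_lt hf hr).2 (∑ i, lam i • x i))).exists
    calc ∑ i, c i * |lam i| ≤ ∑ i, ((s i : ℤ) * f j (x i)) * |lam i| := by
          gcongr with i
          exact hj i
      _ = f j (∑ i, lam i • x i) := by
          simp only [map_sum, map_smul, smul_eq_mul]
          exact Finset.sum_congr rfl fun i _ => by rw [mul_right_comm, hs]
      _ ≤ r * ‖∑ i, lam i • x i‖ := (le_abs_self _).trans hjr
  have hlim : Tendsto (fun r : ℝ => r * ‖∑ i, lam i • x i‖)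
      (nhdsWithin (asymptoticNorm l f) (Set.Ioi (asymptoticNorm l f)))
      (nhds (asymptoticNorm l f * ‖∑ i, lam i • x i‖)) :=
    ((continuous_mul_const _).tendsto _).mono_left nhdsWithin_le_nhds
  exact ge_of_tendsto hlim (eventually_mem_nhdsWithin.mono le_of_lt)

end AsymptoticNorm

/-- A sequence of finitely supported, disjoint coefficient vectors of `ℓ¹` norm one, encoding the
normalized block sequences of all families indexed by `ι` at once. -/
structure BlockSeq (ι : Type*) where
  toFun : ℕ → ι →₀ ℝ
  disjoint_support : Pairwise fun m n => Disjoint (toFun m).support (toFun n).support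
  sum_abs : ∀ n, ((toFun n).sum fun _ c => |c|) = 1

namespace BlockSeq

variable {ι : Type*}

instance : CoeFun (BlockSeq ι) fun _ => ℕ → ι →₀ ℝ := ⟨toFun⟩

/-- Refinement: `w ≤ u` means that, for each `N`, all but finitely many terms of `w` lie in the
absolutely convex hull of the tail `{u n | N ≤ n}`. Testing against absolutely convex sets
makes transitivity immediate. -/
instance : Preorder (BlockSeq ι) where
  le w u := ∀ S : Set (ι →₀ ℝ), AbsConvex ℝ S → (∀ᶠ n in atTop, u n ∈ S) → ∀ᶠ n in atTop, w n ∈ S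
  le_refl _ _ _ h := h
  le_trans _ _ _ hzw hwu S hS h := hzw S hS (hwu S hS h)

theorem eventually_disjoint_support (u : BlockSeq ι) (A : Finset ι) :
    ∀ᶠ n in atTop, Disjoint A (u n).support := by
  have eventually_notMem (a : ι) : ∀ᶠ n in atTop, a ∉ (u n).support := by
    by_cases h : ∃ k, a ∈ (u k).support
    · obtain ⟨k, hk⟩ := h
      filter_upwards [eventually_gt_atTop k] with n hn
      exact Finset.disjoint_left.1 (u.disjoint_support hn.ne) hk
    · exact Eventually.of_forall (not_exists.1 h)
  filter_upwards [(Finset.eventually_all A).2 fun a _ => eventually_notMem a] with n hn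
  exact Finset.disjoint_left.2 hn

theorem bddBelow_range_of_antitone {u : ℕ → BlockSeq ι} (hu : Antitone u) :
    BddBelow (Set.range u) := by
  classical
  obtain ⟨k, hk⟩ := exists_seq_forall_prefix
    (Q := fun n (x : Fin n → ℕ) y => (∀ i : Fin n, Disjoint (u i (x i)).support (u n y).support) ∧
      ∀ i ≤ n, u n y ∈ absConvexHull ℝ (u i '' Set.Ici n)) fun n x => by
    have hdisj := (u n).eventually_disjoint_support
      (Finset.univ.biUnion fun i : Fin n => (u i (x i)).support)
    have hhull : ∀ᶠ y in atTop, ∀ i ∈ Set.Iic n, u n y ∈ absConvexHull ℝ (u i '' Set.Ici n) := by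
      refine (eventually_all_finite (Set.finite_Iic n)).2 fun i hi =>
        hu hi _ absConvex_absConvexHull ?_
      filter_upwards [eventually_ge_atTop n] with y hy
      exact subset_absConvexHull (Set.mem_image_of_mem _ hy)
    obtain ⟨y, hy, hy'⟩ := (hdisj.and hhull).exists
    exact ⟨y, fun i => (Finset.disjoint_biUnion_left _ _ _).1 hy i (Finset.mem_univ i), hy'⟩
  have hlt {m n : ℕ} (hmn : m < n) : Disjoint (u m (k m)).support (u n (k n)).support :=
    (hk n).1 ⟨m, hmn⟩
  refine ⟨⟨fun n => u n (k n), fun m n hmn => ?_, fun n => (u n).sum_abs (k n)⟩, ?_⟩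
  · rcases hmn.lt_or_gt with h | h
    exacts [hlt h, (hlt h).symm]
  · rintro _ ⟨i, rfl⟩ S hS huS
    obtain ⟨N, hN⟩ := eventually_atTop.1 huS
    filter_upwards [eventually_ge_atTop (max i N)] with n hn
    refine absConvexHull_min ?_ hS ((hk n).2 i (le_of_max_le_left hn))
    rintro _ ⟨m, hm, rfl⟩
    exact hN m ((le_of_max_le_right hn).trans hm)

/-- The top element is the sequence of unit vectors, so that `⊤.block g = g`. -/
noncomputable instance : Top (BlockSeq ℕ) where
  top :=
    { toFun n := Finsupp.single n 1
      disjoint_support m n hmn := by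
        simpa [Finsupp.support_single] using hmn
      sum_abs n := by simp }

noncomputable instance : OrderTop (BlockSeq ℕ) where
  le_top u S hS htop := by
    obtain ⟨N, hN⟩ := eventually_atTop.1 htop
    filter_upwards [u.eventually_disjoint_support (Finset.range N)] with n hn
    rw [← (u n).sum_single, Finsupp.sum]
    have (i : ℕ) : Finsupp.single i (u n i) = u n i • Finsupp.single i 1 := by simp
    simp only [this]
    refine sum_smul_mem_of_absConvex hS (u.sum_abs n) fun i hi => hN i ?_
    simpa using Finset.disjoint_right.1 hn hi

section Combine

variable {κ : Type*} [Fintype κ] {p : κ × ℕ → ℕ} {c : κ → ℝ}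

theorem tendsto_apply_prodMk_atTop {κ : Type*} {p : κ × ℕ → ℕ} (hp : p.Injective) (t : κ) :
    Tendsto (fun j => p (t, j)) atTop atTop :=
  (hp.comp (Prod.mk_right_injective t)).nat_tendsto_atTop

/-- The block sequence `j ↦ ∑ t, c t • u (p (t, j))` combining the disjoint subsequences
`j ↦ u (p (t, j))` of `u` with fixed weights. -/
noncomputable def combine (u : BlockSeq ι) (hp : p.Injective) (hc : ∑ t, |c t| = 1) :
    BlockSeq ι where
  toFun j := ∑ t, c t • u (p (t, j))
  disjoint_support j j' hj := by
    classical
    have support_subset (j : ℕ) : (∑ t, c t • u (p (t, j))).support ⊆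
        Finset.univ.biUnion fun t => (u (p (t, j))).support :=
      Finsupp.support_finsetSum.trans <|
        Finset.biUnion_mono fun _ _ => Finsupp.support_smul
    refine Disjoint.mono (support_subset j) (support_subset j') ?_
    simp only [Finset.disjoint_biUnion_left, Finset.disjoint_biUnion_right]
    exact fun t _ t' _ => u.disjoint_support (hp.ne fun h => hj (Prod.ext_iff.1 h).2)
  sum_abs j := by
    have hdisj : Pairwise fun t t' =>
        Disjoint (c t • u (p (t, j))).support (c t' • u (p (t', j))).support := fun t t' htt' =>
      (u.disjoint_support (hp.ne fun h => htt' (Prod.ext_iff.1 h).1)).mono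
        Finsupp.support_smul Finsupp.support_smul
    rw [finsupp_sum_sum_of_disjoint hdisj, ← hc]
    refine Finset.sum_congr rfl fun t _ => ?_
    rw [Finsupp.sum_smul_index' fun _ => abs_zero]
    simp only [smul_eq_mul, abs_mul, ← Finsupp.mul_sum, u.sum_abs, mul_one]

theorem combine_le (u : BlockSeq ι) (hp : p.Injective) (hc : ∑ t, |c t| = 1) :
    u.combine hp hc ≤ u := by
  intro S hS huS
  filter_upwards [eventually_all.2 fun t =>
    (tendsto_apply_prodMk_atTop hp t).eventually huS] with j hj
  exact sum_smul_mem_of_absConvex hS hc fun t _ => hj t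

end Combine

section Block

variable {E V : Type*} [SeminormedAddCommGroup E] [NormedSpace ℝ E] [AddCommGroup V] [Module ℝ V]
  {u w : BlockSeq ι} {g : ι → Module.Dual ℝ E}

/-- The normalized block sequence of `g` with coefficients `u`. -/
noncomputable def block (u : BlockSeq ι) (g : ι → V) (n : ℕ) : V :=
  Finsupp.linearCombination ℝ g (u n)

theorem block_top (g : ℕ → V) : (⊤ : BlockSeq ℕ).block g = g :=
  funext fun n => (Finsupp.linearCombination_single ℝ 1 n).trans (one_smul ℝ _)

theorem block_combine {κ : Type*} [Fintype κ] {p : κ × ℕ → ℕ} {c : κ → ℝ} (hp : p.Injective)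
    (hc : ∑ t, |c t| = 1) (g : ι → V) (j : ℕ) :
    (u.combine hp hc).block g j = ∑ t, c t • u.block g (p (t, j)) := by
  simp only [block, combine, map_sum, map_smul]

theorem exists_finset_coeff_sum_smul_eq_block (u : BlockSeq ι) (g : ι → V) :
    ∃ (F : ℕ → Finset ι) (lam : ι → ℝ), (Pairwise fun m n => Disjoint (F m) (F n)) ∧
      (∀ n, ∑ i ∈ F n, |lam i| = 1) ∧ ∀ n, ∑ i ∈ F n, lam i • g i = u.block g n := by
  have coeff_eq (n : ℕ) : ∀ i ∈ (u n).support, ∑ᶠ m, u m i = u n i := fun i hi =>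
    finsum_eq_single _ n fun m hmn =>
      Finsupp.notMem_support_iff.1 (Finset.disjoint_right.1 (u.disjoint_support hmn) hi)
  refine ⟨fun n => (u n).support, fun i => ∑ᶠ m, u m i, u.disjoint_support, fun n => ?_,
    fun n => Finset.sum_congr rfl fun i hi => congrArg (· • g i) (coeff_eq n i hi)⟩
  rw [← u.sum_abs n]
  exact Finset.sum_congr rfl fun i hi => congrArg abs (coeff_eq n i hi)

theorem asymptoticBounds_block_subset (hwu : w ≤ u) :
    asymptoticBounds atTop (u.block g) ⊆ asymptoticBounds atTop (w.block g) := fun r hr =>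
  ⟨hr.1, fun x => hwu _ (absConvex_setOf_abs_le
    (Module.Dual.eval ℝ E x ∘ₗ Finsupp.linearCombination ℝ g) (r * ‖x‖)) (hr.2 x)⟩

theorem asymptoticNorm_block_le (hwu : w ≤ u) (hu : (asymptoticBounds atTop (u.block g)).Nonempty) :
    asymptoticNorm atTop (w.block g) ≤ asymptoticNorm atTop (u.block g) :=
  csInf_le_csInf bddBelow_asymptoticBounds hu (asymptoticBounds_block_subset hwu)

/-- A block sequence is regular for `g` if no refinement lowers its asymptotic norm. -/
def IsRegular (u : BlockSeq ι) (g : ι → Module.Dual ℝ E) : Prop :=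
  ∀ z ≤ u, asymptoticNorm atTop (u.block g) ≤ asymptoticNorm atTop (z.block g)

theorem exists_isRegular {g : ℕ → Module.Dual ℝ E} (hg : (asymptoticBounds atTop g).Nonempty) :
    ∃ u : BlockSeq ℕ, (asymptoticBounds atTop (u.block g)).Nonempty ∧ u.IsRegular g := by
  have hne (u : BlockSeq ℕ) : (asymptoticBounds atTop (u.block g)).Nonempty :=
    (by rwa [block_top] : (asymptoticBounds atTop ((⊤ : BlockSeq ℕ).block g)).Nonempty).mono
      (asymptoticBounds_block_subset le_top)
  obtain ⟨u, -, hu⟩ := exists_le_forall_le_apply_le (fun _ => bddBelow_range_of_antitone)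
    (f := fun u : BlockSeq ℕ => asymptoticNorm atTop (u.block g))
    (fun _ u hwu => asymptoticNorm_block_le hwu (hne u))
    ⟨0, Set.forall_mem_range.2 fun _ => asymptoticNorm_nonneg⟩ ⊤
  exact ⟨u, hne u, hu⟩

section IsRegular

variable {κ : Type*} [Nonempty κ] {c r : ℝ}

theorem IsRegular.exists_frequently_lt_sum_block [Fintype κ]
    (hu : u.IsRegular g) (hr₀ : 0 ≤ r) (hr : r < asymptoticNorm atTop (u.block g)) (s : κ → ℤˣ)
    {p : κ × ℕ → ℕ} (hp : p.Injective) : ∃ x, ‖x‖ ≤ 1 ∧ ∃ᶠ j in atTop,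
      Fintype.card κ * r < ∑ t, (s t : ℤ) * u.block g (p (t, j)) x := by
  have hd : (0 : ℝ) < Fintype.card κ := Nat.cast_pos.2 Fintype.card_pos
  have hc : ∑ t, |((s t : ℤ) : ℝ) / Fintype.card κ| = 1 := by
    simp only [abs_div, abs_unit_intCast, Nat.abs_cast, Finset.sum_const, Finset.card_univ,
      nsmul_eq_mul, mul_one_div_cancel hd.ne']
  obtain ⟨x, hx, hxr⟩ := exists_frequently_lt_of_lt_asymptoticNorm hr₀
    (hr.trans_le (hu _ (u.combine_le hp hc)))
  refine ⟨x, hx, hxr.mono fun j hj => ?_⟩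
  simp only [block_combine, LinearMap.sum_apply, LinearMap.smul_apply, smul_eq_mul,
    div_mul_eq_mul_div, ← Finset.sum_div] at hj
  exact (lt_div_iff₀' hd).1 hj

theorem IsRegular.exists_frequently_forall_le_mul_block [Finite κ]
    (hu : u.IsRegular g) (hc₀ : 0 ≤ c) (hc : c < asymptoticNorm atTop (u.block g)) (s : κ → ℤˣ)
    {p : κ × ℕ → ℕ} (hp : p.Injective) : ∃ x, ‖x‖ ≤ 1 ∧ ∃ᶠ j in atTop,
      ∀ t, c ≤ (s t : ℤ) * u.block g (p (t, j)) x := by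
  cases nonempty_fintype κ
  set r := asymptoticNorm atTop (u.block g)
  set d := (Fintype.card κ : ℝ)
  have hd : 1 ≤ d := Nat.one_le_cast.2 Fintype.card_pos
  obtain ⟨ρ, hρ, hρc⟩ : ∃ ρ, 0 < ρ ∧ 2 * d * ρ = r - c :=
    ⟨(r - c) / (2 * d), div_pos (sub_pos.2 hc) (by positivity), by field_simp⟩
  have hρr : ρ ≤ r := by nlinarith
  obtain ⟨x, hx, hsum⟩ := hu.exists_frequently_lt_sum_block (sub_nonneg.2 hρr)
    (sub_lt_self r hρ) s hp
  have hupper : ∀ᶠ j in atTop, ∀ t, |u.block g (p (t, j)) x| ≤ r + ρ := by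
    have hmem := mem_asymptoticBounds_of_asymptoticNorm_lt
      (nonempty_asymptoticBounds_of_asymptoticNorm_pos (hc₀.trans_lt hc)) (lt_add_of_pos_right r hρ)
    exact eventually_all.2 fun t => (tendsto_apply_prodMk_atTop hp t).eventually <|
      (hmem.2 x).mono fun j hj => hj.trans (mul_le_of_le_one_right hmem.1 hx)
  refine ⟨x, hx, (hsum.and_eventually hupper).mono fun j ⟨hj, hj'⟩ t => ?_⟩
  have hle (t : κ) : (s t : ℤ) * u.block g (p (t, j)) x ≤ r + ρ := by
    refine (le_abs_self _).trans ?_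
    rw [abs_mul, abs_unit_intCast, one_mul]
    exact hj' t
  linarith [sum_sub_card_sub_one_mul_le hle t, hj]

theorem IsRegular.exists_forall_frequently_and_le_mul_block [Finite κ]
    (hu : u.IsRegular g) (hc₀ : 0 ≤ c) (hc : c < asymptoticNorm atTop (u.block g)) (s : κ → ℤˣ)
    {P : κ → ℕ → Prop} (hP : ∀ t, ∃ᶠ j in atTop, P t j) :
    ∃ x, ‖x‖ ≤ 1 ∧ ∀ t, ∃ᶠ j in atTop, P t j ∧ c ≤ (s t : ℤ) * u.block g j x := by
  obtain ⟨p, hp, hpP⟩ := exists_injective_forall_of_forall_frequently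
    (P := fun a : κ × ℕ => P a.1) fun a => hP a.1
  obtain ⟨x, hx, hfreq⟩ := hu.exists_frequently_forall_le_mul_block hc₀ hc s hp
  exact ⟨x, hx, fun t => (tendsto_apply_prodMk_atTop hp t).frequently
    (hfreq.mono fun j hj => ⟨hpP (t, j), hj t⟩)⟩

end IsRegular

theorem IsRegular.exists_signIndependent_snoc (hu : u.IsRegular g) {n : ℕ}
    {c : Fin (n + 1) → ℝ} (hc₀ : 0 ≤ c (Fin.last n))
    (hc : c (Fin.last n) < asymptoticNorm atTop (u.block g)) {x : Fin n → E}
    (hx : SignIndependent atTop (u.block g) (Fin.init c) x) :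
    ∃ y, ‖y‖ ≤ 1 ∧ SignIndependent atTop (u.block g) c (Fin.snoc x y) := by
  obtain ⟨y, hy, hfreq⟩ := hu.exists_forall_frequently_and_le_mul_block hc₀ hc
    (fun s : Fin (n + 1) → ℤˣ => s (Fin.last n)) fun s => hx (Fin.init s)
  refine ⟨y, hy, fun s => (hfreq s).mono fun j ⟨hj, hj'⟩ =>
    Fin.forall_fin_succ'.2 ⟨fun i => ?_, ?_⟩⟩
  · simpa only [Fin.snoc_castSucc, Fin.init] using hj i
  · simpa only [Fin.snoc_last] using hj'

theorem IsRegular.exists_seq_signIndependent (hu : u.IsRegular g) {c : ℕ → ℝ}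
    (hc₀ : ∀ n, 0 ≤ c n) (hc : ∀ n, c n < asymptoticNorm atTop (u.block g)) :
    ∃ a : ℕ → E, (∀ n, ‖a n‖ ≤ 1) ∧
      ∀ n, SignIndependent atTop (u.block g) (fun i : Fin n => c i) fun i => a i := by
  obtain ⟨a, ha⟩ := exists_seq_forall_prefix_of_snoc (P := fun n x => (∀ i, ‖x i‖ ≤ 1) ∧
      SignIndependent atTop (u.block g) (fun i : Fin n => c i) x)
    ⟨fun i => i.elim0, fun _ => Frequently.of_forall fun _ i => i.elim0⟩ fun n x ⟨hx, hxs⟩ => by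
      obtain ⟨y, hy, hys⟩ := hu.exists_signIndependent_snoc
        (c := fun i : Fin (n + 1) => c i) (hc₀ n) (hc n) hxs
      exact ⟨y, Fin.forall_fin_succ'.2 ⟨by simpa using hx, by simpa using hy⟩, hys⟩
  exact ⟨a, fun n => (ha (n + 1)).1 (Fin.last n), fun n => (ha n).2⟩

end Block

end BlockSeq

end HaglerJohnson

open HaglerJohnson in
theorem hagler_johnson_general_general {E : Type*} [SeminormedAddCommGroup E] [NormedSpace ℝ E]
    (g : ℕ → Module.Dual ℝ E) (C : ℝ) (hbdd : ∀ x, ∀ᶠ n in atTop, |g n x| ≤ C * ‖x‖)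
    (hnoblock : ¬ ∃ (F : ℕ → Finset ℕ) (lam : ℕ → ℝ),
      (Pairwise fun m n => Disjoint (F m) (F n)) ∧
      (∀ n, ∑ i ∈ F n, |lam i| = 1) ∧
      (∀ x : E, Tendsto (fun n => (∑ i ∈ F n, lam i • g i) x) atTop (nhds 0))) :
    ∃ (a : ℕ → E) (δ : ℕ → ℝ),
      (∀ n, ‖a n‖ ≤ 1) ∧ (∀ n, δ n ∈ Set.Ioo (0 : ℝ) 1) ∧
      Tendsto δ atTop (nhds 1) ∧
      ∀ (n : ℕ) (lam : ℕ → ℝ),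
        ∑ i ∈ Finset.range (n + 1), δ i * |lam i| ≤
          ‖∑ i ∈ Finset.range (n + 1), lam i • a i‖ := by
  have hg : |C| ∈ asymptoticBounds atTop g := ⟨abs_nonneg C, fun x => (hbdd x).mono fun n hn =>
    hn.trans (mul_le_mul_of_nonneg_right (le_abs_self C) (norm_nonneg x))⟩
  obtain ⟨u, hu_ne, hu⟩ := BlockSeq.exists_isRegular ⟨_, hg⟩
  set r := asymptoticNorm atTop (u.block g)
  have hr : 0 < r := asymptoticNorm_nonneg.lt_of_ne' fun hr => by
    obtain ⟨F, lam, hF, hlam, hFu⟩ := u.exists_finset_coeff_sum_smul_eq_block g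
    refine hnoblock ⟨F, lam, hF, hlam, fun x => ?_⟩
    simpa only [hFu] using tendsto_zero_of_asymptoticNorm_eq_zero hu_ne hr x
  obtain ⟨δ, -, hδ, hδ_tendsto⟩ := exists_seq_strictMono_tendsto' (zero_lt_one' ℝ)
  obtain ⟨a, ha, ha_sign⟩ := hu.exists_seq_signIndependent (c := fun n => δ n * r)
    (fun n => mul_nonneg (hδ n).1.le hr.le) fun n => mul_lt_of_lt_one_left hr (hδ n).2
  refine ⟨a, δ, ha, hδ, hδ_tendsto, fun n lam => le_of_mul_le_mul_left ?_ hr⟩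
  simpa only [Finset.sum_range, Finset.mul_sum, mul_assoc, mul_left_comm] using
    (ha_sign (n + 1)).sum_mul_abs_le hu_ne fun i => lam i

/-- Generalized Hagler–Johnson theorem: if no normalized block sequence of a bounded
sequence of the dual converges pointwise to `0`, then `E` contains an asymptotically
isometric copy of `ℓ¹(ℕ)`. -/
theorem hagler_johnson_general {E : Type*} [NormedAddCommGroup E] [NormedSpace ℝ E]
    (g : ℕ → E →L[ℝ] ℝ) (C : ℝ) (hbdd : ∀ n, ‖g n‖ ≤ C)
    (hnoblock : ¬ ∃ (F : ℕ → Finset ℕ) (lam : ℕ → ℝ),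
      (Pairwise fun m n => Disjoint (F m) (F n)) ∧
      (∀ n, ∑ i ∈ F n, |lam i| = 1) ∧
      (∀ x : E, Tendsto (fun n => (∑ i ∈ F n, lam i • g i) x) atTop (nhds 0))) :
    ∃ (a : ℕ → E) (δ : ℕ → ℝ),
      (∀ n, ‖a n‖ ≤ 1) ∧ (∀ n, δ n ∈ Set.Ioo (0:ℝ) 1) ∧
      Tendsto δ atTop (nhds 1) ∧
      ∀ (n : ℕ) (lam : ℕ → ℝ),
        ∑ i ∈ Finset.range (n+1), δ i * |lam i| ≤
          ‖∑ i ∈ Finset.range (n+1), lam i • a i‖ :=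
  hagler_johnson_general_general (fun n => g n) C
    (fun x => Eventually.of_forall fun n => (g n).le_of_opNorm_le (hbdd n) x)
    (by simpa using hnoblock)
end

section
/- Let E be a normed space whose closed dual unit ball Γ_{E'} is weak-star block compact (every sequence in Γ_{E'} has a normalized block sequence converging in the weak-star topology). If every f ∈ E' attains its supremum on the closed unit ball of E, then E has no ϑ-triangular sequence for any ϑ > 0, i.e., E is J-reflexive. (Assume the Hahn–Banach theorem.) -/
open Filter

/-!
The argument is James's. Extend the functionals of a triangular sequence to `E` and let `C n` be
the convex hull of those of index at least `n`. Elements of `C 0` are eventually at least `ϑ` on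
`a`, while weak-star limits of the `C n` vanish on `a`, so the two kinds of functionals are `ϑ`
apart.

Shrinking the separable sets `C n`, one may assume that every `g ∈ C 0` has the same distance to
all weak-star limits. Choose `h n ∈ C n` successively so that
`∑ i < n, (1 - r) r ^ i h i + r ^ n h n` is almost as close as possible to one fixed limit, hence
to every weak-star cluster point `w` of `h`. Every later average competes at stage `n`, so these
distances exceed the norm of `U = ∑ (1 - r) r ^ i (h i - w)` only by a tiny error. At a point `x`
of the ball where `U` attains its norm, for small `r` each `(h n - w) x` is then bounded below by
a fixed positive number, and `w` is not a cluster point after all.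
-/

open Topology Finset

theorem exists_forall_le_add_of_bddBelow {α : Type*} {s : Set α} (hs : s.Nonempty)
    {p : α → ℝ} (hp : BddBelow (p '' s)) {ε : ℝ} (hε : 0 < ε) :
    ∃ a ∈ s, ∀ b ∈ s, p a ≤ p b + ε := by
  obtain ⟨_, ⟨a, ha, rfl⟩, hlt⟩ := Real.lt_sInf_add_pos (hs.image p) hε
  refine ⟨a, ha, fun b hb => hlt.le.trans ?_⟩
  gcongr
  exact csInf_le hp ⟨b, hb, rfl⟩

section GeometricAverages

/-- The average of a sequence `h` with the geometric weights `(1 - r) * r ^ i`, in which all terms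
of index at least `n` are replaced by `v`. -/
def geomAvg {V : Type*} [AddCommGroup V] [Module ℝ V] (r : ℝ) (h : ℕ → V) (n : ℕ) (v : V) : V :=
  ∑ i ∈ range n, ((1 - r) * r ^ i) • h i + r ^ n • v

section Module

variable {V : Type*} [AddCommGroup V] [Module ℝ V] {r : ℝ} {h : ℕ → V} {C : ℕ → Set V}

theorem geomAvg_zero (r : ℝ) (h : ℕ → V) (v : V) : geomAvg r h 0 v = v := by simp [geomAvg]

theorem geomAvg_succ (r : ℝ) (h : ℕ → V) (n : ℕ) (v : V) :
    geomAvg r h (n + 1) v = geomAvg r h n ((1 - r) • h n + r • v) := by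
  simp only [geomAvg, sum_range_succ, pow_succ]
  module

theorem geomAvg_sub_const (r : ℝ) (h : ℕ → V) (w : V) (n : ℕ) (v : V) :
    geomAvg r (fun i => h i - w) n (v - w) = geomAvg r h n v - w := by
  induction n generalizing v with
  | zero => simp only [geomAvg_zero]
  | succ n ih =>
    rw [geomAvg_succ, geomAvg_succ, ← ih]
    congr 1
    module

theorem exists_geomAvg_eq_of_le (hconv : ∀ n, Convex ℝ (C n)) (hanti : Antitone C) (hr0 : 0 ≤ r)
    (hr1 : r ≤ 1) (hh : ∀ n, h n ∈ C n) {m n : ℕ} (hmn : m ≤ n) {v : V} (hv : v ∈ C n) :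
    ∃ v' ∈ C m, geomAvg r h n v = geomAvg r h m v' := by
  induction n, hmn using Nat.le_induction generalizing v with
  | base => exact ⟨v, hv, rfl⟩
  | succ n _ ih =>
    rw [geomAvg_succ]
    exact ih (hconv n (hh n) (hanti n.le_succ hv) (sub_nonneg.2 hr1) hr0 (sub_add_cancel 1 r))

theorem geomAvg_mem (hconv : ∀ n, Convex ℝ (C n)) (hanti : Antitone C) (hr0 : 0 ≤ r) (hr1 : r ≤ 1)
    (hh : ∀ n, h n ∈ C n) {n : ℕ} {v : V} (hv : v ∈ C n) : geomAvg r h n v ∈ C 0 := by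
  obtain ⟨v', hv', heq⟩ := exists_geomAvg_eq_of_le hconv hanti hr0 hr1 hh n.zero_le hv
  rwa [heq, geomAvg_zero]

theorem exists_geomAvg_nearly_min (hne : ∀ n, (C n).Nonempty) {p : V → ℝ}
    (hp : BddBelow (Set.range p)) (r : ℝ) {ε : ℕ → ℝ} (hε : ∀ n, 0 < ε n) :
    ∃ h : ℕ → V, (∀ n, h n ∈ C n) ∧
      ∀ n, ∀ v ∈ C n, p (geomAvg r h n (h n)) ≤ p (geomAvg r h n v) + ε n := by
  have hstep (n : ℕ) (u : V) : ∃ a ∈ C n, ∀ v ∈ C n, p (u + r ^ n • a) ≤ p (u + r ^ n • v) + ε n :=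
    exists_forall_le_add_of_bddBelow (hne n)
      (hp.mono (Set.image_subset_iff.2 fun v _ => Set.mem_range_self (u + r ^ n • v))) (hε n)
  choose next hnext_mem hnext_min using hstep
  let u : ℕ → V := fun n => Nat.rec 0 (fun n u => u + ((1 - r) * r ^ n) • next n u) n
  have hu (n : ℕ) : u n = ∑ i ∈ range n, ((1 - r) * r ^ i) • next i (u i) := by
    induction n with
    | zero => rfl
    | succ n ih => rw [sum_range_succ, ← ih]
  refine ⟨fun n => next n (u n), fun n => hnext_mem n (u n), fun n v hv => ?_⟩
  simpa only [geomAvg, ← hu] using hnext_min n (u n) v hv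

theorem exists_geomAvg_nearly_monotone (hne : ∀ n, (C n).Nonempty) (hconv : ∀ n, Convex ℝ (C n))
    (hanti : Antitone C) {p : V → ℝ} (hp : BddBelow (Set.range p)) (hr0 : 0 ≤ r) (hr1 : r ≤ 1)
    {ε : ℕ → ℝ} (hε : ∀ n, 0 < ε n) :
    ∃ h : ℕ → V, (∀ n, h n ∈ C n) ∧
      ∀ n m, n ≤ m → p (geomAvg r h n (h n)) ≤ p (geomAvg r h m (h m)) + ε n := by
  obtain ⟨h, hh, hmin⟩ := exists_geomAvg_nearly_min hne hp r hε
  refine ⟨h, hh, fun n m hnm => ?_⟩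
  obtain ⟨v, hv, heq⟩ := exists_geomAvg_eq_of_le hconv hanti hr0 hr1 hh hnm (hh m)
  rw [heq]
  exact hmin n v hv

end Module

section Normed

variable {V : Type*} [SeminormedAddCommGroup V] [NormedSpace ℝ V] {r M : ℝ} {h : ℕ → V}

theorem summable_geometric_smul_of_norm_le [CompleteSpace V] (hr0 : 0 ≤ r) (hr1 : r < 1)
    (hh : ∀ n, ‖h n‖ ≤ M) : Summable fun i => ((1 - r) * r ^ i) • h i := by
  refine .of_norm_bounded
    (((summable_geometric_of_lt_one hr0 hr1).mul_left (1 - r)).mul_right M) fun i => ?_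
  have hweight : 0 ≤ (1 - r) * r ^ i := mul_nonneg (sub_nonneg.2 hr1.le) (pow_nonneg hr0 i)
  rw [norm_smul, Real.norm_of_nonneg hweight]
  exact mul_le_mul_of_nonneg_left (hh i) hweight

theorem tendsto_geomAvg (hr0 : 0 ≤ r) (hr1 : r < 1) (hh : ∀ n, ‖h n‖ ≤ M) {U : V}
    (hU : HasSum (fun i => ((1 - r) * r ^ i) • h i) U) :
    Tendsto (fun n => geomAvg r h n (h n)) atTop (𝓝 U) := by
  have htail : Tendsto (fun n => r ^ n • h n) atTop (𝓝 0) :=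
    (tendsto_pow_atTop_nhds_zero_of_lt_one hr0 hr1).zero_smul_isBoundedUnder_le
      (isBoundedUnder_of ⟨M, hh⟩)
  simpa only [geomAvg, add_zero] using hU.tendsto_sum_nat.add htail

end Normed

section Real

variable {r A c M : ℝ} {κ : ℕ → ℝ}

-- The exponent `2 * n + 1` makes the weighted errors sum to `c * (1 - r ^ n)`, uniformly below `c`.
theorem sum_geometric_mul_le_of_geomAvg_le (hr0 : 0 ≤ r) (hr1 : r ≤ 1)
    (hκ : ∀ n, geomAvg r κ n (κ n) ≤ A + c * r ^ (2 * n + 1)) (n : ℕ) :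
    ∑ i ∈ range n, (1 - r) * r ^ i * κ i ≤ A - r ^ n * (A - c * (1 - r ^ n)) := by
  induction n with
  | zero => simp
  | succ n ih =>
    have hκn := hκ n
    simp only [geomAvg, smul_eq_mul] at hκn
    rw [sum_range_succ]
    set σ := ∑ i ∈ range n, (1 - r) * r ^ i * κ i
    calc σ + (1 - r) * r ^ n * κ n
        = r * σ + (1 - r) * (σ + r ^ n * κ n) := by ring
      _ ≤ r * (A - r ^ n * (A - c * (1 - r ^ n))) + (1 - r) * (A + c * r ^ (2 * n + 1)) := by
          gcongr
      _ = A - r ^ (n + 1) * (A - c * (1 - r ^ (n + 1))) := by ring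

theorem le_sum_geometric_mul_of_hasSum (hr0 : 0 ≤ r) (hr1 : r < 1) (hM : ∀ n, κ n ≤ M)
    (hA : HasSum (fun i => (1 - r) * r ^ i * κ i) A) (n : ℕ) :
    A - M * r ^ n ≤ ∑ i ∈ range n, (1 - r) * r ^ i * κ i := by
  have hgeom : HasSum (fun i => (1 - r) * r ^ (i + n) * M) (M * r ^ n) := by
    have hsum := (hasSum_geometric_of_lt_one hr0 hr1).mul_left ((1 - r) * (M * r ^ n))
    rw [mul_right_comm, mul_inv_cancel₀ (sub_pos.2 hr1).ne', one_mul] at hsum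
    exact hsum.congr_fun fun i => by ring
  have htail := hasSum_le (fun i => mul_le_mul_of_nonneg_left (hM (i + n))
    (mul_nonneg (sub_nonneg.2 hr1.le) (pow_nonneg hr0 (i + n))))
    ((hasSum_nat_add_iff' n).2 hA) hgeom
  linarith

theorem sub_le_mul_of_geomAvg_le (hr0 : 0 < r) (hr1 : r < 1) (hc : 0 ≤ c) (hM : ∀ n, κ n ≤ M)
    (hA : HasSum (fun i => (1 - r) * r ^ i * κ i) A)
    (hκ : ∀ n, geomAvg r κ n (κ n) ≤ A + c * r ^ (2 * n + 1)) (n : ℕ) :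
    A - c - M * r ≤ (1 - r) * κ n := by
  have hupper := sum_geometric_mul_le_of_geomAvg_le hr0.le hr1.le hκ n
  have hlower := le_sum_geometric_mul_of_hasSum hr0.le hr1 hM hA (n + 1)
  have herror : 0 ≤ c * (r ^ n * r ^ n) := by positivity
  rw [sum_range_succ] at hlower
  refine le_of_mul_le_mul_left ?_ (pow_pos hr0 n)
  linear_combination hupper + hlower + herror

end Real

end GeometricAverages

section SeminormedSpace

variable {E : Type*} [SeminormedAddCommGroup E] [NormedSpace ℝ E]

section UnitBall

theorem apply_le_norm_of_norm_le_one (f : StrongDual ℝ E) {x : E} (hx : ‖x‖ ≤ 1) : f x ≤ ‖f‖ :=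
  (Real.le_norm_self _).trans (f.unit_le_opNorm x hx)

theorem norm_le_of_forall_apply_le {f : StrongDual ℝ E} {M : ℝ} (h : ∀ x, ‖x‖ ≤ 1 → f x ≤ M) :
    ‖f‖ ≤ M := by
  have hM : 0 ≤ M := by simpa using h 0 (by simp)
  refine f.opNorm_le_of_unit_norm hM fun x hx => abs_le'.2 ⟨h x hx.le, ?_⟩
  simpa using h (-x) (by rw [norm_neg, hx])

theorem exists_norm_le_one_lt_apply {f : StrongDual ℝ E} {c : ℝ} (hc : c < ‖f‖) :
    ∃ x, ‖x‖ ≤ 1 ∧ c < f x := by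
  by_contra! h
  exact hc.not_ge (norm_le_of_forall_apply_le h)

theorem geomAvg_apply (r : ℝ) (k : ℕ → StrongDual ℝ E) (n : ℕ) (f : StrongDual ℝ E) (x : E) :
    geomAvg r k n f x = geomAvg r (fun i => k i x) n (f x) := by
  simp [geomAvg]

theorem exists_forall_le_apply_of_supAttaining
    (hsup : ∀ f : StrongDual ℝ E, ∃ x : E, ‖x‖ ≤ 1 ∧ ∀ y : E, ‖y‖ ≤ 1 → f y ≤ f x)
    {r c M θ : ℝ} (hr0 : 0 < r) (hr1 : r < 1) (hc : 0 ≤ c) {k : ℕ → StrongDual ℝ E}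
    (hM : ∀ n, ‖k n‖ ≤ M) (hθ : ∀ n, θ ≤ ‖geomAvg r k n (k n)‖)
    (hmono : ∀ n m, n ≤ m →
      ‖geomAvg r k n (k n)‖ ≤ ‖geomAvg r k m (k m)‖ + c * r ^ (2 * n + 1)) :
    ∃ x, ∀ n, θ - c - M * r ≤ (1 - r) * k n x := by
  obtain ⟨U, hU⟩ := summable_geometric_smul_of_norm_le hr0.le hr1 hM
  have hlim : Tendsto (fun n => ‖geomAvg r k n (k n)‖) atTop (𝓝 ‖U‖) :=
    (tendsto_geomAvg hr0.le hr1 hM hU).norm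
  obtain ⟨x, hx, hxmax⟩ := hsup U
  have hUx : ‖U‖ ≤ U x := norm_le_of_forall_apply_le hxmax
  have hθU : θ ≤ ‖U‖ := ge_of_tendsto' hlim hθ
  have hUsum : HasSum (fun i => (1 - r) * r ^ i * k i x) (U x) := by
    simpa using hU.mapL (ContinuousLinearMap.apply ℝ ℝ x)
  have havg (n : ℕ) : geomAvg r (fun i => k i x) n (k n x) ≤ U x + c * r ^ (2 * n + 1) :=
    calc geomAvg r (fun i => k i x) n (k n x)
        = geomAvg r k n (k n) x := (geomAvg_apply r k n (k n) x).symm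
      _ ≤ ‖geomAvg r k n (k n)‖ := apply_le_norm_of_norm_le_one _ hx
      _ ≤ ‖U‖ + c * r ^ (2 * n + 1) :=
          ge_of_tendsto (hlim.add_const _) ((eventually_ge_atTop n).mono (hmono n))
      _ ≤ U x + c * r ^ (2 * n + 1) := by gcongr
  have hbound (n : ℕ) : k n x ≤ M := (apply_le_norm_of_norm_le_one _ hx).trans (hM n)
  refine ⟨x, fun n => ?_⟩
  linarith [sub_le_mul_of_geomAvg_le hr0 hr1 hc hbound hUsum havg n]

end UnitBall

section WeakStarLimits

/-- The weak-star limits of a sequence of sets of functionals: the functionals that lie in the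
weak-star closure of every set of the sequence. -/
def weakStarLimitSet (C : ℕ → Set (StrongDual ℝ E)) : Set (StrongDual ℝ E) :=
  {w | ∀ n, StrongDual.toWeakDual w ∈ closure (StrongDual.toWeakDual '' C n)}

/-- Decreasing sequences of nonempty bounded convex sets. In a dual space their weak-star limits,
which exist by the Banach–Alaoglu theorem, take the place of limits of subsequences. -/
structure IsNestedConvex {V : Type*} [SeminormedAddCommGroup V] [NormedSpace ℝ V]
    (C : ℕ → Set V) : Prop where
  nonempty : ∀ n, (C n).Nonempty
  convex : ∀ n, Convex ℝ (C n)
  antitone : Antitone C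
  isBounded : Bornology.IsBounded (C 0)

variable {C C' : ℕ → Set (StrongDual ℝ E)} {w : StrongDual ℝ E}

theorem weakStarLimitSet_subset (h : ∀ n, ∃ m, C' m ⊆ C n) :
    weakStarLimitSet C' ⊆ weakStarLimitSet C := fun _ hw n =>
  let ⟨m, hm⟩ := h n
  closure_mono (Set.image_mono hm) (hw m)

theorem apply_mem_of_mem_weakStarLimitSet (hw : w ∈ weakStarLimitSet C) {n : ℕ} {x : E} {s : Set ℝ}
    (hs : IsClosed s) (h : ∀ f ∈ C n, f x ∈ s) : w x ∈ s :=
  closure_minimal (t := (fun f : WeakDual ℝ E => f x) ⁻¹' s) (Set.image_subset_iff.2 h)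
    (hs.preimage (WeakDual.eval_continuous x)) (hw n)

theorem exists_apply_lt_of_mem_weakStarLimitSet (hw : w ∈ weakStarLimitSet C) {x : E} {c : ℝ}
    (hc : w x < c) (n : ℕ) : ∃ f ∈ C n, f x < c := by
  by_contra! h
  exact hc.not_ge (apply_mem_of_mem_weakStarLimitSet hw isClosed_Ici h)

namespace IsNestedConvex

theorem exists_mapClusterPt (hC : IsNestedConvex C) {h : ℕ → StrongDual ℝ E}
    (hh : ∀ n, h n ∈ C n) :
    ∃ w ∈ weakStarLimitSet C,
      MapClusterPt (StrongDual.toWeakDual w) atTop fun n => StrongDual.toWeakDual (h n) := by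
  obtain ⟨R, hR⟩ := hC.isBounded.subset_closedBall 0
  obtain ⟨w, -, hw⟩ := (WeakDual.isCompact_closedBall (0 : StrongDual ℝ E) R).exists_mapClusterPt
    (f := atTop) (u := fun n => StrongDual.toWeakDual (h n))
    (tendsto_principal.2 (.of_forall fun n => hR (hC.antitone n.zero_le (hh n))))
  have htail (n : ℕ) : ∀ᶠ m in atTop, StrongDual.toWeakDual (h m) ∈ StrongDual.toWeakDual '' C n :=
    (eventually_ge_atTop n).mono fun m hm => Set.mem_image_of_mem _ (hC.antitone hm (hh m))
  exact ⟨WeakDual.toStrongDual w,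
    fun n => ClusterPt.mem_closure (ClusterPt.mono hw (tendsto_principal.2 (htail n))), hw⟩

theorem weakStarLimitSet_nonempty (hC : IsNestedConvex C) : (weakStarLimitSet C).Nonempty := by
  choose h hh using hC.nonempty
  obtain ⟨w, hw, -⟩ := hC.exists_mapClusterPt hh
  exact ⟨w, hw⟩

theorem exists_norm_le (hC : IsNestedConvex C) :
    ∃ R, (∀ f ∈ C 0, ‖f‖ ≤ R) ∧ ∀ w ∈ weakStarLimitSet C, ‖w‖ ≤ R := by
  obtain ⟨R, hR⟩ := hC.isBounded.exists_norm_le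
  refine ⟨R, hR, fun w hw => norm_le_of_forall_apply_le fun x hx => ?_⟩
  exact apply_mem_of_mem_weakStarLimitSet hw isClosed_Iic fun f hf =>
    (apply_le_norm_of_norm_le_one f hx).trans (hR f hf)

theorem inter_halfSpace (hC : IsNestedConvex C) (hw : w ∈ weakStarLimitSet C) {x : E} {c : ℝ}
    (hc : w x < c) : IsNestedConvex fun n => C n ∩ {f | f x < c} where
  nonempty := exists_apply_lt_of_mem_weakStarLimitSet hw hc
  convex n := (hC.convex n).inter
    (convex_halfSpace_lt (ContinuousLinearMap.apply ℝ ℝ x).isLinear c)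
  antitone _ _ hmn := Set.inter_subset_inter_left _ (hC.antitone hmn)
  isBounded := hC.isBounded.subset Set.inter_subset_left

theorem exists_le_nearly_equidistant (hC : IsNestedConvex C) (g : StrongDual ℝ E) {ε : ℝ}
    (hε : 0 < ε) :
    ∃ C' ≤ C, IsNestedConvex C' ∧
      ∀ w ∈ weakStarLimitSet C', ∀ w' ∈ weakStarLimitSet C', ‖g - w‖ ≤ ‖g - w'‖ + ε := by
  obtain ⟨R, -, hR⟩ := hC.exists_norm_le
  have hbdd : BddBelow ((fun w => -‖g - w‖) '' weakStarLimitSet C) := by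
    refine ⟨-(‖g‖ + R), ?_⟩
    rintro _ ⟨w, hw, rfl⟩
    linarith [norm_sub_le g w, hR w hw]
  obtain ⟨w₀, hw₀, hfar⟩ :=
    exists_forall_le_add_of_bddBelow hC.weakStarLimitSet_nonempty hbdd (half_pos hε)
  obtain ⟨x, hx, hgx⟩ := exists_norm_le_one_lt_apply (sub_lt_self ‖g - w₀‖ (half_pos hε))
  have hw₀x : w₀ x < g x - (‖g - w₀‖ - ε / 2) := by
    rw [sub_apply] at hgx
    linarith
  have hle : (fun n => C n ∩ {f | f x < g x - (‖g - w₀‖ - ε / 2)}) ≤ C :=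
    fun _ => Set.inter_subset_left
  refine ⟨_, hle, hC.inter_halfSpace hw₀ hw₀x, fun w hw w' hw' => ?_⟩
  have hw_le : ‖g - w‖ ≤ ‖g - w₀‖ + ε / 2 := by
    linarith [hfar w (weakStarLimitSet_subset (fun n => ⟨n, hle n⟩) hw)]
  have hw'x : w' x ≤ g x - (‖g - w₀‖ - ε / 2) :=
    apply_mem_of_mem_weakStarLimitSet hw' (n := 0) isClosed_Iic fun f hf =>
      Set.mem_Iic.2 (le_of_lt hf.2)
  have hw'_ge : g x - w' x ≤ ‖g - w'‖ := apply_le_norm_of_norm_le_one (g - w') hx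
  linarith

theorem exists_le_forall_weakStarLimitSet {ι : Type*} [Countable ι]
    {Q : ι → Set (StrongDual ℝ E) → Prop} (hQ : ∀ i, Antitone (Q i))
    (hshrink : ∀ i (B : ℕ → Set (StrongDual ℝ E)), IsNestedConvex B →
      ∃ B' ≤ B, IsNestedConvex B' ∧ Q i (weakStarLimitSet B'))
    (hC : IsNestedConvex C) :
    ∃ C' ≤ C, IsNestedConvex C' ∧ ∀ i, Q i (weakStarLimitSet C') := by
  cases isEmpty_or_nonempty ι
  · exact ⟨C, le_rfl, hC, isEmptyElim⟩
  obtain ⟨e, he⟩ := exists_surjective_nat ι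
  choose! shrink hshrink_le hshrink_nested hshrink_Q using hshrink
  let B : ℕ → ℕ → Set (StrongDual ℝ E) := fun k => Nat.rec C (fun k B => shrink (e k) B) k
  have hB (k : ℕ) : IsNestedConvex (B k) := by
    induction k with
    | zero => exact hC
    | succ k ih => exact hshrink_nested (e k) (B k) ih
  have hB_anti : Antitone B := antitone_nat_of_succ_le fun k => hshrink_le (e k) (B k) (hB k)
  refine ⟨fun n => B n n, fun n => hB_anti n.zero_le n, ⟨fun n => (hB n).nonempty n,
    fun n => (hB n).convex n, fun m n hmn => (hB_anti hmn n).trans ((hB m).antitone hmn),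
    hC.isBounded⟩, he.forall.2 fun k => hQ (e k) ?_ (hshrink_Q (e k) (B k) (hB k))⟩
  -- From index `k + 1` on, the diagonal refines the stage at which `Q (e k)` was achieved.
  exact weakStarLimitSet_subset fun n => ⟨max (k + 1) n,
    (hB_anti (le_max_left (k + 1) n) _).trans ((hB (k + 1)).antitone (le_max_right (k + 1) n))⟩

theorem exists_le_equidistant (hC : IsNestedConvex C) {S : Set (StrongDual ℝ E)}
    (hS : TopologicalSpace.IsSeparable S) :
    ∃ C' ≤ C, IsNestedConvex C' ∧
      ∀ g ∈ S, ∀ w ∈ weakStarLimitSet C', ∀ w' ∈ weakStarLimitSet C', ‖g - w‖ = ‖g - w'‖ := by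
  obtain ⟨D, hD, hSD⟩ := hS
  have := hD.to_subtype
  obtain ⟨C', hle, hC', hnear⟩ := exists_le_forall_weakStarLimitSet
    (Q := fun (i : D × ℕ) W => ∀ w ∈ W, ∀ w' ∈ W,
      ‖(i.1 : StrongDual ℝ E) - w‖ ≤ ‖(i.1 : StrongDual ℝ E) - w'‖ + 1 / (i.2 + 1))
    (fun _ _ _ hsub hW w hw w' hw' => hW w (hsub hw) w' (hsub hw'))
    (fun i B hB => hB.exists_le_nearly_equidistant i.1 Nat.one_div_pos_of_nat) hC
  have hle_dist (d : D) {w w' : StrongDual ℝ E} (hw : w ∈ weakStarLimitSet C')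
      (hw' : w' ∈ weakStarLimitSet C') :
      ‖(d : StrongDual ℝ E) - w‖ ≤ ‖(d : StrongDual ℝ E) - w'‖ := by
    refine le_of_forall_pos_le_add fun ε hε => ?_
    obtain ⟨m, hm⟩ := exists_nat_one_div_lt hε
    exact (hnear (d, m) w hw w' hw').trans (by gcongr)
  refine ⟨C', hle, hC', fun g hg w hw w' hw' => ?_⟩
  have hclosed : IsClosed {g : StrongDual ℝ E | ‖g - w‖ = ‖g - w'‖} :=
    isClosed_eq (by fun_prop) (by fun_prop)
  exact closure_minimal (fun d hd => (hle_dist ⟨d, hd⟩ hw hw').antisymm (hle_dist ⟨d, hd⟩ hw' hw))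
    hclosed (hSD hg)

theorem exists_norm_sub_lt_of_equidistant (hC : IsNestedConvex C)
    (hsup : ∀ f : StrongDual ℝ E, ∃ x : E, ‖x‖ ≤ 1 ∧ ∀ y : E, ‖y‖ ≤ 1 → f y ≤ f x)
    (hequi : ∀ g ∈ C 0, ∀ w ∈ weakStarLimitSet C, ∀ w' ∈ weakStarLimitSet C, ‖g - w‖ = ‖g - w'‖)
    {θ : ℝ} (hθ : 0 < θ) : ∃ g ∈ C 0, ∃ w ∈ weakStarLimitSet C, ‖g - w‖ < θ := by
  by_contra! hfar
  obtain ⟨R, hRC, hRW⟩ := hC.exists_norm_le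
  obtain ⟨w₀, hw₀⟩ := hC.weakStarLimitSet_nonempty
  have hR : 0 ≤ R := (norm_nonneg w₀).trans (hRW w₀ hw₀)
  -- This choice gives both `r < 1 / 2` and `(R + R) * r < θ / 2`.
  obtain ⟨r, hr0, hr⟩ := exists_pos_mul_lt (half_pos hθ) (R + R + θ)
  have hr1 : r < 1 := by nlinarith
  have hrM : 0 < θ - θ / 2 - (R + R) * r := by nlinarith
  obtain ⟨h, hh, hmono⟩ := exists_geomAvg_nearly_monotone hC.nonempty hC.convex hC.antitone
    (p := fun g => ‖g - w₀‖) ⟨0, by rintro _ ⟨g, rfl⟩; exact norm_nonneg _⟩ hr0.le hr1.le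
    (ε := fun n => θ / 2 * r ^ (2 * n + 1)) fun n => by positivity
  obtain ⟨w, hw, hcluster⟩ := hC.exists_mapClusterPt hh
  have havg_mem (n : ℕ) : geomAvg r h n (h n) ∈ C 0 :=
    geomAvg_mem hC.convex hC.antitone hr0.le hr1.le hh (hh n)
  obtain ⟨x, hx⟩ := exists_forall_le_apply_of_supAttaining hsup hr0 hr1 (half_pos hθ).le
    (k := fun n => h n - w) (M := R + R) (θ := θ)
    (fun n => norm_sub_le_of_le (hRC _ (hC.antitone n.zero_le (hh n))) (hRW w hw))
    (fun _ => by simpa only [geomAvg_sub_const] using hfar _ (havg_mem _) w hw)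
    (fun n m hnm => by
      simpa only [geomAvg_sub_const, hequi _ (havg_mem _) w hw w₀ hw₀] using hmono n m hnm)
  have hclose : ∃ᶠ n in atTop, h n x - w x < θ - θ / 2 - (R + R) * r :=
    hcluster.frequently <| ContinuousAt.eventually_lt
      ((WeakDual.eval_continuous x).sub continuous_const).continuousAt
      continuousAt_const (by simpa using hrM)
  obtain ⟨n, hn⟩ := hclose.exists
  have hxn : θ - θ / 2 - (R + R) * r ≤ (1 - r) * (h n x - w x) := hx n
  nlinarith

theorem exists_norm_sub_lt (hC : IsNestedConvex C) (hsep : TopologicalSpace.IsSeparable (C 0))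
    (hsup : ∀ f : StrongDual ℝ E, ∃ x : E, ‖x‖ ≤ 1 ∧ ∀ y : E, ‖y‖ ≤ 1 → f y ≤ f x)
    {θ : ℝ} (hθ : 0 < θ) : ∃ g ∈ C 0, ∃ w ∈ weakStarLimitSet C, ‖g - w‖ < θ := by
  obtain ⟨C', hle, hC', hequi⟩ := hC.exists_le_equidistant hsep
  obtain ⟨g, hg, w, hw, hlt⟩ :=
    hC'.exists_norm_sub_lt_of_equidistant hsup (fun g hg => hequi g (hle 0 hg)) hθ
  exact ⟨g, hle 0 hg, w, weakStarLimitSet_subset (fun n => ⟨n, hle n⟩) hw, hlt⟩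

end IsNestedConvex

end WeakStarLimits

section Triangular

/-- The convex hulls of the tails of a sequence, to be used as an instance of `IsNestedConvex`. -/
def tailHull {V : Type*} [AddCommGroup V] [Module ℝ V] (g : ℕ → V) (n : ℕ) : Set V :=
  convexHull ℝ (g '' Set.Ici n)

theorem isNestedConvex_tailHull {V : Type*} [SeminormedAddCommGroup V] [NormedSpace ℝ V]
    {g : ℕ → V} (hg : Bornology.IsBounded (Set.range g)) : IsNestedConvex (tailHull g) where
  nonempty _ := (Set.nonempty_Ici.image g).convexHull
  convex _ := convex_convexHull ℝ _
  antitone _ _ hmn := convexHull_mono (Set.image_mono (Set.Ici_subset_Ici.2 hmn))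
  isBounded := isBounded_convexHull.2 (hg.subset (Set.image_subset_range g _))

theorem isSeparable_tailHull {V : Type*} [SeminormedAddCommGroup V] [NormedSpace ℝ V]
    (g : ℕ → V) (n : ℕ) : TopologicalSpace.IsSeparable (tailHull g n) :=
  ((Set.countable_range g).isSeparable.span (R := ℝ)).mono <| convexHull_min
    ((Set.image_subset_range g _).trans Submodule.subset_span) (Submodule.convex _)

/-- A `ϑ`-triangular sequence whose functionals are defined on all of `E` instead of on the span of
`a`. -/
structure IsTriangular (ϑ : ℝ) (a : ℕ → E) (g : ℕ → StrongDual ℝ E) : Prop where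
  norm_vec_le : ∀ n, ‖a n‖ ≤ 1
  norm_functional_le : ∀ n, ‖g n‖ ≤ 1
  apply_eq_zero : ∀ n i, i < n → g n (a i) = 0
  le_apply : ∀ n i, n ≤ i → ϑ ≤ g n (a i)

namespace IsTriangular

variable {ϑ : ℝ} {a : ℕ → E} {g : ℕ → StrongDual ℝ E} {f w : StrongDual ℝ E}

theorem apply_eq_zero_of_mem_weakStarLimitSet (h : IsTriangular ϑ a g)
    (hw : w ∈ weakStarLimitSet (tailHull g)) (i : ℕ) : w (a i) = 0 := by
  refine apply_mem_of_mem_weakStarLimitSet hw (n := i + 1) isClosed_singleton fun f hf => ?_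
  refine convexHull_min (t := {f : StrongDual ℝ E | f (a i) = 0}) ?_
    (convex_hyperplane (ContinuousLinearMap.apply ℝ ℝ (a i)).isLinear 0) hf
  rintro _ ⟨n, hn, rfl⟩
  exact h.apply_eq_zero n i hn

theorem eventually_le_apply_of_mem_tailHull (h : IsTriangular ϑ a g) (hf : f ∈ tailHull g 0) :
    ∀ᶠ i in atTop, ϑ ≤ f (a i) := by
  refine convexHull_min (t := {f : StrongDual ℝ E | ∀ᶠ i in atTop, ϑ ≤ f (a i)}) ?_ ?_ hf
  · rintro _ ⟨n, -, rfl⟩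
    exact (eventually_ge_atTop n).mono (h.le_apply n)
  · intro f hf f' hf' s t hs ht hst
    filter_upwards [hf, hf'] with i hi hi'
    exact convex_Ici ϑ hi hi' hs ht hst

theorem le_norm_sub (h : IsTriangular ϑ a g) (hf : f ∈ tailHull g 0)
    (hw : w ∈ weakStarLimitSet (tailHull g)) : ϑ ≤ ‖f - w‖ := by
  obtain ⟨i, hi⟩ := (h.eventually_le_apply_of_mem_tailHull hf).exists
  calc ϑ ≤ f (a i) := hi
    _ = (f - w) (a i) := by
      rw [sub_apply, h.apply_eq_zero_of_mem_weakStarLimitSet hw, sub_zero]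
    _ ≤ ‖f - w‖ := apply_le_norm_of_norm_le_one _ (h.norm_vec_le i)

end IsTriangular

end Triangular

theorem blockCompact_supAttaining_no_triangular_general
    (hsup : ∀ f : E →L[ℝ] ℝ, ∃ x : E, ‖x‖ ≤ 1 ∧ ∀ y : E, ‖y‖ ≤ 1 → f y ≤ f x) :
    ¬ ∃ (ϑ : ℝ) (a : ℕ → E)
        (f : ℕ → (Submodule.span ℝ (Set.range a) →L[ℝ] ℝ)),
      0 < ϑ ∧ (∀ n, ‖a n‖ ≤ 1) ∧ (∀ n, ‖f n‖ ≤ 1) ∧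
      (∀ n i, i < n → f n ⟨a i, Submodule.subset_span ⟨i, rfl⟩⟩ = 0) ∧
      (∀ n i, n ≤ i → ϑ ≤ f n ⟨a i, Submodule.subset_span ⟨i, rfl⟩⟩) := by
  rintro ⟨ϑ, a, f, hϑ, ha, hf, hzero, hge⟩
  choose g hg_ext hg_norm using fun n => exists_extension_norm_eq _ (f n)
  have hga (n i : ℕ) : g n (a i) = f n ⟨a i, Submodule.subset_span ⟨i, rfl⟩⟩ := hg_ext n ⟨a i, _⟩
  have hg : IsTriangular ϑ a g :=
    ⟨ha, fun n => (hg_norm n).trans_le (hf n), fun n i hi => (hga n i).trans (hzero n i hi),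
      fun n i hi => (hge n i hi).trans_eq (hga n i).symm⟩
  have hbdd : Bornology.IsBounded (Set.range g) :=
    isBounded_iff_forall_norm_le.2 ⟨1, Set.forall_mem_range.2 hg.norm_functional_le⟩
  obtain ⟨φ, hφ, w, hw, hlt⟩ :=
    (isNestedConvex_tailHull hbdd).exists_norm_sub_lt (isSeparable_tailHull g 0) hsup hϑ
  exact hlt.not_ge (hg.le_norm_sub hφ hw)

end SeminormedSpace

/-- If the dual unit ball is weak-star block compact and every functional attains its
supremum on the unit ball, then `E` has no `ϑ`-triangular sequence for any `ϑ > 0`. -/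
theorem blockCompact_supAttaining_no_triangular {E : Type*}
    [NormedAddCommGroup E] [NormedSpace ℝ E]
    (hblockcompact : ∀ f : ℕ → E →L[ℝ] ℝ, (∀ n, ‖f n‖ ≤ 1) →
      ∃ (F : ℕ → Finset ℕ) (lam : ℕ → ℝ) (φ : E →L[ℝ] ℝ),
        (Pairwise fun m n => Disjoint (F m) (F n)) ∧
        (∀ n, ∑ i ∈ F n, |lam i| = 1) ∧
        (∀ x : E, Tendsto (fun n => (∑ i ∈ F n, lam i • f i) x) atTop (nhds (φ x))))
    (hsup : ∀ f : E →L[ℝ] ℝ, ∃ x : E, ‖x‖ ≤ 1 ∧ ∀ y : E, ‖y‖ ≤ 1 → f y ≤ f x) :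
    ¬ ∃ (ϑ : ℝ) (a : ℕ → E)
        (f : ℕ → (Submodule.span ℝ (Set.range a) →L[ℝ] ℝ)),
      0 < ϑ ∧ (∀ n, ‖a n‖ ≤ 1) ∧ (∀ n, ‖f n‖ ≤ 1) ∧
      (∀ n i, i < n → f n ⟨a i, Submodule.subset_span ⟨i, rfl⟩⟩ = 0) ∧
      (∀ n i, n ≤ i → ϑ ≤ f n ⟨a i, Submodule.subset_span ⟨i, rfl⟩⟩) :=
  blockCompact_supAttaining_no_triangular_general hsup
end

section
/- Let E be a separable normed space in which every continuous linear functional attains its supremum on the closed unit ball. Then E is J-reflexive: Γ_E contains no sequence (a_n) with inf_n distance(span{a_i : i < n}, conv{a_i : i ≥ n}) > 0. -/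
open Filter

/-! If `E` is not J-reflexive, Hahn–Banach turns the separated sequence `a` into functionals `f n`
of norm at most one that vanish on `a i` for `i < n` and are at least `ϑ` on `a i` for `i ≥ n`. A
weak-star limit `l` of a subsequence vanishes on every `a i`, whereas each convex combination of the
`f n` is at least `ϑ` on `a i` for large `i`; so `l` stays at distance `ϑ` from their convex hull.
On the other hand, if every functional attains its norm on the unit ball of `E`, that ball is a
boundary for the dual, and Simons' inequality puts the pointwise limit `l` into the norm-closed
convex hull.

Simons' inequality comes from `x = ∑ 2⁻⁽ᵏ⁺¹⁾ hₖ`, where each `hₖ` is chosen greedily to make the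
norm as small as possible: a functional norming `x` then takes at least almost the value `‖x‖` on
all tail averages `∑ₖ 2⁻⁽ᵏ⁺¹⁾ hₙ₊ₖ`.
-/

open Set Metric Bornology Topology

section CountableConvexCombination

variable {ι X : Type*} [AddCommGroup X] [Module ℝ X] [TopologicalSpace X] [ContinuousSMul ℝ X]

lemma mem_of_hasSum_smul_of_convex_of_isClosed {s : Set X} (hs : Convex ℝ s) (hs' : IsClosed s)
    {w : ι → ℝ} (hw₀ : ∀ i, 0 ≤ w i) (hw₁ : HasSum w 1) {z : ι → X} (hz : ∀ i, z i ∈ s) {x : X}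
    (hx : HasSum (fun i ↦ w i • z i) x) : x ∈ s := by
  have hlim : Tendsto (fun t : Finset ι ↦ t.centerMass w z) atTop (𝓝 x) := by
    simpa only [inv_one, one_smul, Finset.centerMass, SummationFilter.unconditional_filter] using
      (Tendsto.inv₀ hw₁ one_ne_zero).smul hx
  have hpos : ∀ᶠ t : Finset ι in atTop, 0 < ∑ i ∈ t, w i :=
    Tendsto.eventually_const_lt one_pos hw₁
  exact hs'.mem_of_tendsto hlim <| hpos.mono fun t ht ↦
    hs.centerMass_mem (fun i _ ↦ hw₀ i) ht fun i _ ↦ hz i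

end CountableConvexCombination

section DyadicMean

variable {X : Type*} [NormedAddCommGroup X] [NormedSpace ℝ X] {h : ℕ → X}

/-- The countable convex combination `∑ 2⁻⁽ᵏ⁺¹⁾ hₖ` of a sequence (`0` if the series diverges). -/
noncomputable def dyadicMean (h : ℕ → X) : X :=
  ∑' k, (1 / 2 : ℝ) ^ (k + 1) • h k

/-- The sum of the first `n` terms of the series defining `dyadicMean h`. -/
noncomputable def dyadicPartialSum (h : ℕ → X) (n : ℕ) : X :=
  ∑ k ∈ Finset.range n, (1 / 2 : ℝ) ^ (k + 1) • h k

lemma hasSum_half_pow_succ : HasSum (fun k : ℕ ↦ (1 / 2 : ℝ) ^ (k + 1)) 1 := by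
  simpa [pow_succ] using hasSum_geometric_two.mul_right (1 / 2 : ℝ)

variable [CompleteSpace X]

lemma hasSum_dyadicMean (hh : IsBounded (range h)) :
    HasSum (fun k ↦ (1 / 2 : ℝ) ^ (k + 1) • h k) (dyadicMean h) := by
  obtain ⟨M, hM⟩ := hh.exists_norm_le
  refine (Summable.of_norm_bounded (hasSum_half_pow_succ.summable.mul_right M) fun k ↦ ?_).hasSum
  rw [norm_smul, Real.norm_of_nonneg (by positivity)]
  gcongr
  exact hM _ (mem_range_self k)

lemma dyadicMean_mem {s : Set X} (hs : Convex ℝ s) (hs' : IsClosed s) (hh : IsBounded (range h))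
    (hmem : ∀ k, h k ∈ s) : dyadicMean h ∈ s :=
  mem_of_hasSum_smul_of_convex_of_isClosed hs hs' (fun _ ↦ by positivity) hasSum_half_pow_succ hmem
    (hasSum_dyadicMean hh)

lemma dyadicPartialSum_add_dyadicMean (hh : IsBounded (range h)) (n : ℕ) :
    dyadicPartialSum h n + (1 / 2 : ℝ) ^ n • dyadicMean (fun k ↦ h (k + n)) = dyadicMean h := by
  have htail : (1 / 2 : ℝ) ^ n • dyadicMean (fun k ↦ h (k + n)) =
      ∑' k, (1 / 2 : ℝ) ^ (k + n + 1) • h (k + n) := by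
    rw [dyadicMean, ← tsum_const_smul'']
    exact tsum_congr fun k ↦ by rw [smul_smul]; ring_nf
  rw [htail]
  exact (hasSum_dyadicMean hh).summable.sum_add_tsum_nat_add n

lemma dyadicMean_eq_midpoint (hh : IsBounded (range h)) :
    dyadicMean h = (1 / 2 : ℝ) • h 0 + (1 / 2 : ℝ) • dyadicMean (fun k ↦ h (k + 1)) := by
  simpa [dyadicPartialSum] using (dyadicPartialSum_add_dyadicMean hh 1).symm

end DyadicMean

section Simons

variable {X : Type*} [NormedAddCommGroup X] [NormedSpace ℝ X]

/-- A selection `h` from the sets `K n` in which each `h n` minimizes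
`‖dyadicPartialSum h n + 2⁻ⁿ • w‖` over `w ∈ K n`, up to an error `ε * 2⁻⁽²ⁿ⁺¹⁾`. The errors are
such that they still sum to `ε` once the `n`-th one is multiplied by `2ⁿ`. -/
structure IsGreedySelection (K : ℕ → Set X) (ε : ℝ) (h : ℕ → X) : Prop where
  mem : ∀ n, h n ∈ K n
  norm_le : ∀ n, ∀ w ∈ K n, ‖dyadicPartialSum h n + (1 / 2 : ℝ) ^ n • h n‖ ≤
    ‖dyadicPartialSum h n + (1 / 2 : ℝ) ^ n • w‖ + (1 / 2) ^ n * (ε * (1 / 2) ^ (n + 1))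

lemma exists_forall_le_add {α : Type*} {s : Set α} (hs : s.Nonempty) {φ : α → ℝ}
    (hφ : BddBelow (φ '' s)) {ε : ℝ} (hε : 0 < ε) : ∃ x ∈ s, ∀ y ∈ s, φ x ≤ φ y + ε := by
  obtain ⟨_, ⟨x, hx, rfl⟩, hlt⟩ :=
    exists_lt_of_csInf_lt (hs.image φ) (lt_add_of_pos_right (sInf (φ '' s)) hε)
  exact ⟨x, hx, fun y hy ↦ hlt.le.trans (by gcongr; exact csInf_le hφ (mem_image_of_mem φ hy))⟩

lemma exists_isGreedySelection {K : ℕ → Set X} (hK : ∀ n, (K n).Nonempty) {ε : ℝ} (hε : 0 < ε) :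
    ∃ h, IsGreedySelection K ε h := by
  have hmin (n : ℕ) (s : X) : ∃ x ∈ K n, ∀ w ∈ K n, ‖s + (1 / 2 : ℝ) ^ n • x‖ ≤
      ‖s + (1 / 2 : ℝ) ^ n • w‖ + (1 / 2) ^ n * (ε * (1 / 2) ^ (n + 1)) :=
    exists_forall_le_add (hK n) ⟨0, forall_mem_image.2 fun _ _ ↦ norm_nonneg _⟩ (by positivity)
  choose F hF hF' using hmin
  let s : ℕ → X := Nat.rec 0 fun n s ↦ s + (1 / 2 : ℝ) ^ (n + 1) • F n s
  have hs (n : ℕ) : dyadicPartialSum (fun k ↦ F k (s k)) n = s n :=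
    Finset.sum_range_induction _ s rfl n fun _ _ ↦ rfl
  exact ⟨fun n ↦ F n (s n), fun n ↦ hF n (s n),
    fun n w hw ↦ by simpa only [hs] using hF' n (s n) w hw⟩

variable {K : ℕ → Set X} {ε : ℝ} {h : ℕ → X}

namespace IsGreedySelection

lemma isBounded_range (hh : IsGreedySelection K ε h) (hK : Antitone K) (hb : IsBounded (K 0)) :
    IsBounded (range h) :=
  hb.subset <| range_subset_iff.2 fun n ↦ hK n.zero_le (hh.mem n)

variable [CompleteSpace X]

lemma dyadicMean_mem (hh : IsGreedySelection K ε h) (hK : Antitone K) (hb : IsBounded (K 0))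
    (hconv : ∀ n, Convex ℝ (K n)) (hclosed : ∀ n, IsClosed (K n)) (n : ℕ) :
    dyadicMean (fun k ↦ h (k + n)) ∈ K n :=
  _root_.dyadicMean_mem (hconv n) (hclosed n)
    ((hh.isBounded_range hK hb).subset (range_comp_subset_range (· + n) h))
    fun k ↦ hK (Nat.le_add_left n k) (hh.mem (k + n))

lemma apply_le (hh : IsGreedySelection K ε h) (hbdd : IsBounded (range h)) {n : ℕ}
    (hmem : dyadicMean (fun k ↦ h (k + n)) ∈ K n) {b : StrongDual ℝ X} (hb : ‖b‖ ≤ 1)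
    (hbx : b (dyadicMean h) = ‖dyadicMean h‖) :
    b (h n) ≤ b (dyadicMean fun k ↦ h (k + n)) + ε * (1 / 2) ^ (n + 1) := by
  have hle : b (dyadicPartialSum h n) + (1 / 2) ^ n * b (h n) ≤
      b (dyadicPartialSum h n) + (1 / 2) ^ n * b (dyadicMean fun k ↦ h (k + n)) +
        (1 / 2) ^ n * (ε * (1 / 2) ^ (n + 1)) :=
    calc b (dyadicPartialSum h n) + (1 / 2) ^ n * b (h n)
      _ = b (dyadicPartialSum h n + (1 / 2 : ℝ) ^ n • h n) := by simp
      _ ≤ ‖dyadicPartialSum h n + (1 / 2 : ℝ) ^ n • h n‖ :=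
        (Real.le_norm_self _).trans (b.le_of_opNorm_le_of_le hb le_rfl |>.trans_eq (one_mul _))
      _ ≤ ‖dyadicMean h‖ + (1 / 2) ^ n * (ε * (1 / 2) ^ (n + 1)) := by
        simpa only [dyadicPartialSum_add_dyadicMean hbdd] using hh.norm_le n _ hmem
      _ = _ := by
        rw [← hbx, ← dyadicPartialSum_add_dyadicMean hbdd n, map_add, map_smul, smul_eq_mul]
  rw [add_assoc, ← mul_add] at hle
  exact le_of_mul_le_mul_left (le_of_add_le_add_left hle) (by positivity)

lemma norm_dyadicMean_le (hh : IsGreedySelection K ε h) (hbdd : IsBounded (range h))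
    (hmem : ∀ n, dyadicMean (fun k ↦ h (k + n)) ∈ K n) {b : StrongDual ℝ X} (hb : ‖b‖ ≤ 1)
    (hbx : b (dyadicMean h) = ‖dyadicMean h‖) (n : ℕ) :
    ‖dyadicMean h‖ ≤ b (dyadicMean fun k ↦ h (k + n)) + ε * (1 - (1 / 2) ^ n) := by
  induction n with
  | zero => simp [hbx]
  | succ n ih =>
    have hmid : b (dyadicMean fun k ↦ h (k + n)) =
        1 / 2 * b (h n) + 1 / 2 * b (dyadicMean fun k ↦ h (k + (n + 1))) := by
      have htail := dyadicMean_eq_midpoint (hbdd.subset (range_comp_subset_range (· + n) h))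
      simpa [Function.comp_def, add_assoc, add_comm 1] using congrArg b htail
    have hle := hh.apply_le hbdd (hmem n) hb hbx
    rw [pow_succ] at hle ⊢
    linarith

end IsGreedySelection

theorem exists_mem_forall_norming_exists_norm_le [CompleteSpace X] (hne : ∀ n, (K n).Nonempty)
    (hconv : ∀ n, Convex ℝ (K n)) (hclosed : ∀ n, IsClosed (K n)) (hK : Antitone K)
    (hbdd : IsBounded (K 0)) (hε : 0 < ε) :
    ∃ x ∈ K 0, ∀ b : StrongDual ℝ X, ‖b‖ ≤ 1 → b x = ‖x‖ → ∀ n, ∃ w ∈ K n, ‖x‖ ≤ b w + ε := by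
  obtain ⟨h, hh⟩ := exists_isGreedySelection hne hε
  have hmem := hh.dyadicMean_mem hK hbdd hconv hclosed
  refine ⟨dyadicMean h, hmem 0, fun b hb hbx n ↦ ⟨_, hmem n, ?_⟩⟩
  refine (hh.norm_dyadicMean_le (hh.isBounded_range hK hbdd) hmem hb hbx n).trans ?_
  gcongr
  exact mul_le_of_le_one_right hε.le (sub_le_self 1 (by positivity))

end Simons

section Boundary

variable {X : Type*} [NormedAddCommGroup X] [NormedSpace ℝ X]

/-- A James boundary of `X`: a set of functionals in the dual unit ball on which every vector of `X`
attains its norm. -/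
structure IsJamesBoundary (B : Set (StrongDual ℝ X)) : Prop where
  norm_le_one : ∀ b ∈ B, ‖b‖ ≤ 1
  exists_apply_eq_norm : ∀ x : X, ∃ b ∈ B, b x = ‖x‖

open scoped Pointwise in
/-- **Simons' inequality**. -/
theorem IsJamesBoundary.exists_frequently_lt [CompleteSpace X] {B : Set (StrongDual ℝ X)}
    (hB : IsJamesBoundary B) {g : ℕ → X} (hg : IsBounded (range g)) {x : X} {r : ℝ}
    (hr : r < infDist x (closedConvexHull ℝ (range g))) :
    ∃ b ∈ B, ∃ᶠ n in atTop, r < b (g n) - b x := by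
  set δ := infDist x (closedConvexHull ℝ (range g))
  let H (n : ℕ) : Set X := closedConvexHull ℝ (g '' Ici n)
  have hH₀ : H 0 = closedConvexHull ℝ (range g) := by simp [H]
  have hHbdd : IsBounded (H 0) := by
    rw [hH₀, closedConvexHull_eq_closure_convexHull]
    exact (isBounded_convexHull.2 hg).closure
  obtain ⟨y, hy, hnorming⟩ := exists_mem_forall_norming_exists_norm_le
    (K := fun n ↦ -x +ᵥ H n) (ε := (δ - r) / 2)
    (fun n ↦ ((nonempty_Ici.image g).mono subset_closedConvexHull).vadd_set)
    (fun n ↦ convex_closedConvexHull.vadd _) (fun n ↦ isClosed_closedConvexHull.vadd _)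
    (fun m n hmn ↦ vadd_set_mono <|
      (closedConvexHull ℝ).monotone <| image_mono <| Ici_subset_Ici.2 hmn)
    (hHbdd.vadd _) (half_pos (sub_pos.2 hr))
  obtain ⟨b, hbB, hby⟩ := hB.exists_apply_eq_norm y
  refine ⟨b, hbB, fun hle ↦ ?_⟩
  obtain ⟨n, hn⟩ := eventually_atTop.1 hle
  obtain ⟨_, ⟨v, hv, rfl⟩, hvy⟩ := hnorming b (hB.norm_le_one b hbB) hby n
  have hδy : δ ≤ ‖y‖ := by
    obtain ⟨z, hz, rfl⟩ := hy
    simpa [dist_eq_norm', neg_add_eq_sub] using infDist_le_dist_of_mem (x := x) (hH₀ ▸ hz)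
  have hbv : b v ≤ r + b x :=
    closedConvexHull_min (t := {v | b v ≤ r + b x})
      (forall_mem_image.2 fun k hk ↦ sub_le_iff_le_add.1 (not_lt.1 (hn k hk)))
      (convex_halfSpace_le b.toLinearMap.isLinear _) (isClosed_le b.continuous continuous_const) hv
  simp only [vadd_eq_add, map_add, map_neg] at hvy
  linarith

/-- The **Rainwater–Simons theorem**. -/
theorem IsJamesBoundary.mem_closedConvexHull_of_tendsto [CompleteSpace X]
    {B : Set (StrongDual ℝ X)} (hB : IsJamesBoundary B) {g : ℕ → X} (hg : IsBounded (range g))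
    {x : X} (hlim : ∀ b ∈ B, Tendsto (fun n ↦ b (g n)) atTop (𝓝 (b x))) :
    x ∈ closedConvexHull ℝ (range g) := by
  by_contra hx
  have hδ := (isClosed_closedConvexHull.notMem_iff_infDist_pos
    ((range_nonempty g).mono (subset_closedConvexHull (𝕜 := ℝ)))).1 hx
  obtain ⟨b, hbB, hfreq⟩ := hB.exists_frequently_lt hg (half_lt_self hδ)
  refine hfreq <| (((hlim b hbB).sub_const (b x)).eventually_lt_const ?_).mono fun _ ↦ lt_asymm
  rw [sub_self]
  exact half_pos hδ

end Boundary

section Dual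

variable {E : Type*} [NormedAddCommGroup E] [NormedSpace ℝ E]

theorem isJamesBoundary_inclusionInDoubleDual
    (hsup : ∀ f : StrongDual ℝ E, ∃ x : E, ‖x‖ ≤ 1 ∧ ∀ y : E, ‖y‖ ≤ 1 → f y ≤ f x) :
    IsJamesBoundary (NormedSpace.inclusionInDoubleDual ℝ E '' closedBall 0 1) where
  norm_le_one := forall_mem_image.2 fun x hx ↦
    (NormedSpace.double_dual_bound ℝ E x).trans (mem_closedBall_zero_iff.1 hx)
  exists_apply_eq_norm f := by
    obtain ⟨x, hx, hmax⟩ := hsup f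
    refine ⟨_, mem_image_of_mem _ (mem_closedBall_zero_iff.2 hx), ?_⟩
    rw [NormedSpace.dual_def]
    refine le_antisymm ((Real.le_norm_self _).trans (f.unit_le_opNorm x hx)) ?_
    refine f.opNorm_le_of_unit_norm (by simpa using hmax 0 (by simp)) fun y hy ↦ abs_le'.2 ⟨?_, ?_⟩
    · exact hmax y hy.le
    · simpa using hmax (-y) (by simp [hy])

theorem mem_closedConvexHull_of_tendsto_of_attains_sup
    (hsup : ∀ f : StrongDual ℝ E, ∃ x : E, ‖x‖ ≤ 1 ∧ ∀ y : E, ‖y‖ ≤ 1 → f y ≤ f x)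
    {g : ℕ → StrongDual ℝ E} (hg : IsBounded (range g)) {l : StrongDual ℝ E}
    (hlim : ∀ x, Tendsto (fun n ↦ g n x) atTop (𝓝 (l x))) : l ∈ closedConvexHull ℝ (range g) :=
  (isJamesBoundary_inclusionInDoubleDual hsup).mem_closedConvexHull_of_tendsto hg <|
    forall_mem_image.2 fun x _ ↦ by simpa only [NormedSpace.dual_def] using hlim x

lemma notMem_closedConvexHull_of_eventually_add_le {g : ℕ → StrongDual ℝ E} {l : StrongDual ℝ E}
    {a : ℕ → E} (ha : ∀ i, ‖a i‖ ≤ 1) {δ : ℝ} (hδ : 0 < δ)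
    (hg : ∀ n, ∀ᶠ i in atTop, l (a i) + δ ≤ g n (a i)) : l ∉ closedConvexHull ℝ (range g) := by
  rw [closedConvexHull_eq_closure_convexHull, Metric.mem_closure_iff]
  intro hl
  obtain ⟨c, hc, hlc⟩ := hl δ hδ
  have hconv : Convex ℝ {c : StrongDual ℝ E | ∀ᶠ i in atTop, l (a i) + δ ≤ c (a i)} := by
    intro c₁ h₁ c₂ h₂ s t hs ht hst
    filter_upwards [h₁, h₂] with i hi₁ hi₂
    exact convex_Ici (𝕜 := ℝ) (l (a i) + δ) hi₁ hi₂ hs ht hst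
  have hsub : convexHull ℝ (range g) ⊆ {c | ∀ᶠ i in atTop, l (a i) + δ ≤ c (a i)} :=
    convexHull_min (range_subset_iff.2 hg) hconv
  obtain ⟨i, hi⟩ := Eventually.exists (hsub hc)
  have hle : c (a i) - l (a i) ≤ dist l c := by
    rw [dist_eq_norm']
    exact (Real.le_norm_self _).trans ((c - l).unit_le_opNorm _ (ha i))
  linarith

lemma exists_norm_le_one_forall_le_apply {s : Set E} (hs : Convex ℝ s) {δ : ℝ} (hδ : 0 < δ)
    (hle : ∀ y ∈ s, δ ≤ ‖y‖) : ∃ f : StrongDual ℝ E, ‖f‖ ≤ 1 ∧ ∀ y ∈ s, δ ≤ f y := by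
  have hdisj : Disjoint (ball (0 : E) δ) s := disjoint_left.2 fun y hy hys ↦
    (mem_ball_zero_iff.1 hy).not_ge (hle y hys)
  obtain ⟨f, u, hball, hfs⟩ := geometric_hahn_banach_open (convex_ball 0 δ) isOpen_ball hs hdisj
  have hu : 0 < u := by simpa using hball 0 (mem_ball_self hδ)
  have hpolar : u⁻¹ • f ∈ StrongDual.polar ℝ (ball (0 : E) δ) := by
    refine (StrongDual.mem_polar_iff ℝ _).2 fun y hy ↦ ?_
    have hneg : -f y ≤ u := by simpa using (hball (-y) (by simpa using hy)).le
    rw [smul_apply, norm_smul, norm_inv, Real.norm_of_nonneg hu.le,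
      inv_mul_le_one₀ hu]
    exact abs_le'.2 ⟨(hball y hy).le, hneg⟩
  rw [NormedSpace.polar_ball hδ, mem_closedBall_zero_iff] at hpolar
  refine ⟨δ • u⁻¹ • f, ?_, fun y hy ↦ ?_⟩
  · rw [norm_smul, Real.norm_of_nonneg hδ.le]
    exact (mul_le_mul_of_nonneg_left hpolar hδ.le).trans_eq (mul_inv_cancel₀ hδ.ne')
  · exact le_mul_of_one_le_right hδ.le ((one_le_inv_mul₀ hu).2 (hfs y hy))

lemma apply_eq_zero_of_forall_le (V : Submodule ℝ E) (f : StrongDual ℝ E) {c : ℝ}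
    (hf : ∀ x ∈ V, f x ≤ c) {x : E} (hx : x ∈ V) : f x = 0 := by
  by_contra hne
  have hle := hf (((c + 1) / f x) • x) (V.smul_mem _ hx)
  rw [map_smul, smul_eq_mul, div_mul_cancel₀ _ hne] at hle
  linarith

open scoped Pointwise in
lemma exists_norm_le_one_eq_zero_forall_le_apply (V : Submodule ℝ E) {s : Set E}
    (hs : Convex ℝ s) {δ : ℝ} (hδ : 0 < δ) (hle : ∀ x ∈ V, ∀ y ∈ s, δ ≤ ‖x - y‖) :
    ∃ f : StrongDual ℝ E, ‖f‖ ≤ 1 ∧ (∀ x ∈ V, f x = 0) ∧ ∀ y ∈ s, δ ≤ f y := by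
  obtain rfl | ⟨y₀, hy₀⟩ := s.eq_empty_or_nonempty
  · exact ⟨0, by simp, by simp, by simp⟩
  have hle' : ∀ z ∈ s - (V : Set E), δ ≤ ‖z‖ := by
    rintro _ ⟨y, hy, x, hx, rfl⟩
    exact (hle x hx y hy).trans_eq (norm_sub_rev x y)
  obtain ⟨f, hf, hfδ⟩ := exists_norm_le_one_forall_le_apply (hs.sub V.convex) hδ hle'
  have hfV : ∀ x ∈ V, f x ≤ f y₀ - δ := fun x hx ↦ by
    have := hfδ _ (sub_mem_sub hy₀ hx)
    rw [map_sub] at this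
    linarith
  exact ⟨f, hf, fun x hx ↦ apply_eq_zero_of_forall_le V f hfV hx,
    fun y hy ↦ by simpa using hfδ _ (sub_mem_sub hy V.zero_mem)⟩

lemma exists_triangular_functionals {a : ℕ → E} {ϑ : ℝ} (hϑ : 0 < ϑ)
    (ha : ∀ n, ∀ x ∈ Submodule.span ℝ (a '' {i | i < n}),
      ∀ y ∈ convexHull ℝ (a '' {i | n ≤ i}), ϑ ≤ ‖x - y‖) :
    ∃ f : ℕ → StrongDual ℝ E, (∀ n, ‖f n‖ ≤ 1) ∧ (∀ n i, i < n → f n (a i) = 0) ∧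
      ∀ n i, n ≤ i → ϑ ≤ f n (a i) := by
  choose f hf hspan hhull using fun n ↦ exists_norm_le_one_eq_zero_forall_le_apply _
    (convex_convexHull ℝ (a '' {i | n ≤ i})) hϑ (ha n)
  exact ⟨f, hf, fun n i hi ↦ hspan n _ (Submodule.subset_span (mem_image_of_mem a hi)),
    fun n i hi ↦ hhull n _ (subset_convexHull ℝ _ (mem_image_of_mem a hi))⟩

theorem james_sup_separable_general
    (hcompact : IsSeqCompact (WeakDual.toStrongDual ⁻¹' closedBall (0 : StrongDual ℝ E) 1))
    (hsup : ∀ f : E →L[ℝ] ℝ, ∃ x : E, ‖x‖ ≤ 1 ∧ ∀ y : E, ‖y‖ ≤ 1 → f y ≤ f x) :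
    ¬ ∃ (a : ℕ → E) (ϑ : ℝ), 0 < ϑ ∧ (∀ n, ‖a n‖ ≤ 1) ∧
      ∀ n : ℕ, ∀ x ∈ (Submodule.span ℝ (a '' {i | i < n}) : Set E),
        ∀ y ∈ convexHull ℝ (a '' {i | n ≤ i}), ϑ ≤ ‖x - y‖ := by
  rintro ⟨a, ϑ, hϑ, ha, hsep⟩
  obtain ⟨f, hf, hf_zero, hf_le⟩ := exists_triangular_functionals hϑ hsep
  obtain ⟨l, -, φ, hφ, hlim⟩ := hcompact (x := fun n ↦ StrongDual.toWeakDual (f n))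
    fun n ↦ mem_closedBall_zero_iff.2 (hf n)
  have hlim_apply (x : E) : Tendsto (fun k ↦ f (φ k) x) atTop (𝓝 (WeakDual.toStrongDual l x)) :=
    ((WeakDual.eval_continuous x).tendsto l).comp hlim
  have hl_zero (i : ℕ) : WeakDual.toStrongDual l (a i) = 0 :=
    tendsto_nhds_unique (hlim_apply (a i)) <| tendsto_const_nhds.congr' <|
      (hφ.tendsto_atTop.eventually_gt_atTop i).mono fun k hk ↦ (hf_zero (φ k) i hk).symm
  refine notMem_closedConvexHull_of_eventually_add_le ha hϑ (g := f ∘ φ)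
    (l := WeakDual.toStrongDual l) (fun k ↦ ?_) ?_
  · filter_upwards [eventually_ge_atTop (φ k)] with i hi
    simpa [hl_zero] using hf_le (φ k) i hi
  · refine mem_closedConvexHull_of_tendsto_of_attains_sup hsup ?_ hlim_apply
    exact isBounded_closedBall.subset <| range_subset_iff.2 fun k ↦
      mem_closedBall_zero_iff.2 (hf (φ k))

end Dual

/-- James' sup theorem for separable normed spaces: a separable normed space in which
every continuous functional attains its supremum on the unit ball is J-reflexive. -/
theorem james_sup_separable {E : Type*} [NormedAddCommGroup E] [NormedSpace ℝ E]
    [TopologicalSpace.SeparableSpace E]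
    (hsup : ∀ f : E →L[ℝ] ℝ, ∃ x : E, ‖x‖ ≤ 1 ∧ ∀ y : E, ‖y‖ ≤ 1 → f y ≤ f x) :
    ¬ ∃ (a : ℕ → E) (ϑ : ℝ), 0 < ϑ ∧ (∀ n, ‖a n‖ ≤ 1) ∧
      ∀ n : ℕ, ∀ x ∈ (Submodule.span ℝ (a '' {i | i < n}) : Set E),
        ∀ y ∈ convexHull ℝ (a '' {i | n ≤ i}), ϑ ≤ ‖x - y‖ :=
  james_sup_separable_general (WeakDual.isSeqCompact_closedBall ℝ E 0 1) hsup
end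

section
/- Let E be a sup-reflexive normed space (every f ∈ E' attains its supremum on the closed unit ball). If the closed unit ball of E' is weak-star block compact, then E is J-reflexive. (Assume the Hahn–Banach theorem.) -/
open Filter

/-!
By Hahn–Banach, a sequence `a` in the unit ball with all the distances at least `ϑ > 0` yields
functionals `f n` of norm at most `1` that vanish at `a i` for `i < n` and are at least `ϑ` at `a i`
for `i ≥ n`. By Rosenthal's `ℓ¹`-theorem, either a subsequence of `f` converges pointwise to some
`ψ`, or a subsequence satisfies a lower `ℓ¹`-estimate. In the first case `f n - ψ` is pointwise
null, yet its convex combinations are at least `ϑ` at `a i` for large `i`, because `ψ (a i) = 0`. In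
the second case a weak-star convergent block sequence `b` makes `b (2 * n) - b (2 * n + 1)`
pointwise null, yet the `ℓ¹`-estimate keeps its convex combinations away from `0`. Both contradict
Simons' inequality: sup-reflexivity says that the unit ball is a James boundary of the dual, so a
bounded pointwise null sequence of functionals has convex combinations of arbitrarily small norm.
-/

section Simons

open Set Topology

/-- A James boundary of `X`: a set of functionals in the dual unit ball on which every vector
attains its norm. -/
def IsJamesBoundary_s17 {X : Type*} [NormedAddCommGroup X] [NormedSpace ℝ X]
    (B : Set (StrongDual ℝ X)) : Prop :=
  (∀ ℓ ∈ B, ‖ℓ‖ ≤ 1) ∧ ∀ x, ∃ ℓ ∈ B, ℓ x = ‖x‖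

theorem exists_seq_forall_partialSum {X : Type*} [AddCommMonoid X] {P : ℕ → X → X → Prop}
    (hP : ∀ n s, ∃ x, P n s x) (w : ℕ → X → X) :
    ∃ x : ℕ → X, ∀ n, P n (∑ i ∈ Finset.range n, w i (x i)) (x n) := by
  choose next hnext using hP
  let s : ℕ → X := fun n => Nat.rec 0 (fun n s => s + w n (next n s)) n
  have hs (n : ℕ) : s n = ∑ i ∈ Finset.range n, w i (next i (s i)) :=
    (Finset.sum_range_induction _ s rfl n fun _ _ => rfl).symm
  exact ⟨fun n => next n (s n), fun n => hs n ▸ hnext n (s n)⟩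

variable {X : Type*} [NormedAddCommGroup X] [NormedSpace ℝ X]

theorem mem_of_hasSum_half_pow {K : Set X} (hK : Convex ℝ K) (hK' : IsClosed K) {x : ℕ → X}
    (hx : ∀ n, x n ∈ K) {y : X} (hy : HasSum (fun n => (1 / 2 : ℝ) ^ (n + 1) • x n) y) :
    y ∈ K := by
  have hpartial (n : ℕ) : ∀ z ∈ K,
      ∑ i ∈ Finset.range n, (1 / 2 : ℝ) ^ (i + 1) • x i + (1 / 2 : ℝ) ^ n • z ∈ K := by
    induction n with
    | zero => simp
    | succ n ih =>
      intro z hz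
      convert ih ((1 / 2 : ℝ) • x n + (1 / 2 : ℝ) • z)
        (hK (hx n) hz (by norm_num) (by norm_num) (by norm_num)) using 1
      rw [Finset.sum_range_succ, pow_succ]
      module
  have hremainder : Tendsto (fun n : ℕ => (1 / 2 : ℝ) ^ n • x 0) atTop (𝓝 0) := by
    simpa using (tendsto_pow_atTop_nhds_zero_of_lt_one (r := (1 / 2 : ℝ)) (by norm_num)
      (by norm_num)).smul_const (x 0)
  have hlim := hy.tendsto_sum_nat.add hremainder
  rw [add_zero] at hlim
  exact hK'.mem_of_tendsto hlim (Eventually.of_forall fun n => hpartial n _ (hx 0))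

theorem tsum_half_pow_eq_sum_add_tail {x : ℕ → X}
    (hx : Summable fun n => (1 / 2 : ℝ) ^ n • x n) (n : ℕ) :
    ∑' i, (1 / 2 : ℝ) ^ i • x i = ∑ i ∈ Finset.range n, (1 / 2 : ℝ) ^ i • x i +
      (2 * (1 / 2 : ℝ) ^ n) • ∑' k, (1 / 2 : ℝ) ^ (k + 1) • x (k + n) := by
  rw [← hx.sum_add_tsum_nat_add n, ← tsum_const_smul'']
  congr! 3 with k
  rw [smul_smul]
  congr 1
  ring

theorem summable_half_pow_smul [CompleteSpace X] {x : ℕ → X}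
    (hx : Bornology.IsBounded (range x)) : Summable fun n => (1 / 2 : ℝ) ^ n • x n := by
  obtain ⟨C, hC⟩ := isBounded_iff_forall_norm_le.1 hx
  refine .of_norm_bounded (summable_geometric_two.mul_right C) fun n => ?_
  rw [norm_smul, Real.norm_of_nonneg (by positivity)]
  gcongr
  exact hC _ (mem_range_self n)

theorem exists_mem_forall_norm_add_smul_le {K : Set X} (hK : K.Nonempty) (u : X) (t : ℝ) {ε : ℝ}
    (hε : 0 < ε) : ∃ h ∈ K, ∀ w ∈ K, ‖u + t • h‖ ≤ ‖u + t • w‖ + ε := by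
  obtain ⟨_, ⟨h, hh, rfl⟩, hlt⟩ :=
    Real.lt_sInf_add_pos (hK.image fun h => ‖u + t • h‖) hε
  refine ⟨h, hh, fun w hw => hlt.le.trans ?_⟩
  gcongr
  exact csInf_le ⟨0, by rintro _ ⟨_, -, rfl⟩; positivity⟩ (mem_image_of_mem _ hw)

-- With near-minimizers `h n ∈ K n`, take `u n = ∑ i < n, h i / 2 ^ i` and its limit `U`;
-- `w n` is the geometric mean value of the tail, hence a competitor of `h n` in `K n`.
theorem exists_near_minimizing_series [CompleteSpace X] {K : ℕ → Set X} (hanti : Antitone K)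
    (hconv : ∀ n, Convex ℝ (K n)) (hclosed : ∀ n, IsClosed (K n)) (hne : ∀ n, (K n).Nonempty)
    (hbdd : Bornology.IsBounded (K 0)) {ε : ℝ} (hε : 0 < ε) :
    ∃ (U : X) (u w : ℕ → X), u 0 = 0 ∧ (∀ n, w n ∈ K n) ∧
      (∀ n, U = u n + (2 * (1 / 2 : ℝ) ^ n) • w n) ∧
      ∀ n, 2 * ‖u (n + 1)‖ ≤ ‖u n‖ + ‖U‖ + (1 / 4 : ℝ) ^ n * ε := by
  obtain ⟨h, hh⟩ := exists_seq_forall_partialSum (fun n s =>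
    exists_mem_forall_norm_add_smul_le (hne n) s (2 * (1 / 2 : ℝ) ^ n)
      (mul_pos (pow_pos (by norm_num : (0 : ℝ) < 1 / 4) n) hε)) fun i x => (1 / 2 : ℝ) ^ i • x
  have hsum : Summable fun n => (1 / 2 : ℝ) ^ n • h n := summable_half_pow_smul <|
    hbdd.subset (range_subset_iff.2 fun n => hanti n.zero_le (hh n).1)
  have htail (n : ℕ) : Summable fun k => (1 / 2 : ℝ) ^ (k + 1) • h (k + n) := by
    have : Summable fun k => (1 / 2 : ℝ) ^ k • h (k + n) := summable_half_pow_smul <|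
      hbdd.subset (range_subset_iff.2 fun k => hanti (k + n).zero_le (hh _).1)
    simpa only [pow_succ', mul_smul] using this.const_smul (1 / 2 : ℝ)
  have hw (n : ℕ) : ∑' k, (1 / 2 : ℝ) ^ (k + 1) • h (k + n) ∈ K n :=
    mem_of_hasSum_half_pow (hconv n) (hclosed n)
      (fun k => hanti (Nat.le_add_left n k) (hh _).1) (htail n).hasSum
  refine ⟨∑' i, (1 / 2 : ℝ) ^ i • h i, fun n => ∑ i ∈ Finset.range n, (1 / 2 : ℝ) ^ i • h i,
    _, rfl, hw, tsum_half_pow_eq_sum_add_tail hsum, fun n => ?_⟩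
  have hmin := (hh n).2 _ (hw n)
  rw [← tsum_half_pow_eq_sum_add_tail hsum n] at hmin
  have hmid : (2 : ℝ) • ∑ i ∈ Finset.range (n + 1), (1 / 2 : ℝ) ^ i • h i =
      ∑ i ∈ Finset.range n, (1 / 2 : ℝ) ^ i • h i +
        (∑ i ∈ Finset.range n, (1 / 2 : ℝ) ^ i • h i + (2 * (1 / 2 : ℝ) ^ n) • h n) := by
    rw [Finset.sum_range_succ]
    module
  calc 2 * ‖∑ i ∈ Finset.range (n + 1), (1 / 2 : ℝ) ^ i • h i‖
      = ‖(2 : ℝ) • ∑ i ∈ Finset.range (n + 1), (1 / 2 : ℝ) ^ i • h i‖ := by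
        rw [norm_smul, Real.norm_ofNat]
    _ ≤ _ := hmid ▸ norm_add_le _ _
    _ ≤ _ := by rw [add_assoc]; gcongr

theorem two_mul_half_pow_mul_le_sub {d : ℕ → ℝ} {D δ ε : ℝ} (h0 : d 0 = 0) (hD : 2 * δ ≤ D)
    (hd : ∀ n, 2 * d (n + 1) ≤ d n + D + (1 / 4 : ℝ) ^ n * ε) (n : ℕ) :
    2 * (1 / 2 : ℝ) ^ n * (δ - ε + (1 / 2 : ℝ) ^ n * ε) ≤ D - d n := by
  induction n with
  | zero => simpa [h0] using hD
  | succ n ih =>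
    have hsq : (1 / 4 : ℝ) ^ n = (1 / 2 : ℝ) ^ n * (1 / 2 : ℝ) ^ n := by rw [← mul_pow]; norm_num
    have := hd n
    rw [hsq] at this
    rw [pow_succ]
    linear_combination (this + ih) / 2

theorem simons_inequality [CompleteSpace X] {B : Set (StrongDual ℝ X)} (hB : IsJamesBoundary_s17 B)
    {g : ℕ → X} (hg : Bornology.IsBounded (range g)) {c δ : ℝ}
    (hc : ∀ ℓ ∈ B, ∀ᶠ n in atTop, ℓ (g n) ≤ c) (hcδ : c < δ) :
    ∃ h ∈ closedConvexHull ℝ (range g), ‖h‖ < δ := by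
  by_contra! hδ
  let K (n : ℕ) : Set X := closedConvexHull ℝ (g '' Ici n)
  have hK (n : ℕ) : K n ⊆ closedConvexHull ℝ (range g) :=
    (closedConvexHull ℝ).monotone (image_subset_range _ _)
  have hbdd : Bornology.IsBounded (K 0) := by
    refine Bornology.IsBounded.subset ?_ (hK 0)
    rw [closedConvexHull_eq_closure_convexHull]
    exact (isBounded_convexHull.2 hg).closure
  obtain ⟨U, u, w, hu0, hwK, hU, hu⟩ := exists_near_minimizing_series (K := K)
    (fun m n hmn => (closedConvexHull ℝ).monotone (image_mono (Ici_subset_Ici.2 hmn)))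
    (fun n => convex_closedConvexHull) (fun n => isClosed_closedConvexHull)
    (fun n => ⟨g n, subset_closedConvexHull (mem_image_of_mem g self_mem_Ici)⟩) hbdd
    (sub_pos.2 hcδ)
  have hUδ : 2 * δ ≤ ‖U‖ := by
    rw [hU 0, hu0, zero_add, pow_zero, mul_one, norm_smul, Real.norm_ofNat]
    gcongr
    exact hδ _ (hK 0 (hwK 0))
  obtain ⟨ℓ, hℓB, hℓU⟩ := hB.2 U
  obtain ⟨N, hN⟩ := eventually_atTop.1 (hc ℓ hℓB)
  have hℓw : ℓ (w N) ≤ c := by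
    refine closedConvexHull_min ?_ (convex_halfSpace_le ℓ.isLinear c)
      (isClosed_le ℓ.continuous continuous_const) (hwK N)
    rintro _ ⟨n, hn, rfl⟩
    exact hN n hn
  have hℓu : ℓ (u N) ≤ ‖u N‖ :=
    (le_abs_self _).trans (by simpa using ℓ.le_of_opNorm_le (hB.1 ℓ hℓB) (u N))
  have hupper : ‖U‖ ≤ ‖u N‖ + 2 * (1 / 2 : ℝ) ^ N * c := by
    calc ‖U‖ = ℓ (u N) + 2 * (1 / 2 : ℝ) ^ N * ℓ (w N) := by
          rw [← hℓU, hU N, map_add, map_smul, smul_eq_mul]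
      _ ≤ _ := by gcongr
  have hlower := two_mul_half_pow_mul_le_sub (d := fun n => ‖u n‖) (by simp [hu0]) hUδ hu N
  have hpos : 0 < 2 * (1 / 2 : ℝ) ^ N * ((1 / 2 : ℝ) ^ N * (δ - c)) :=
    mul_pos (by positivity) (mul_pos (by positivity) (sub_pos.2 hcδ))
  linarith

end Simons

section SupReflexive

open Set Topology

variable {E : Type*} [NormedAddCommGroup E] [NormedSpace ℝ E]

variable (E) in
/-- Sup-reflexivity: every continuous functional attains its supremum on the closed unit ball. -/
def IsSupReflexive : Prop :=
  ∀ f : StrongDual ℝ E, ∃ x : E, ‖x‖ ≤ 1 ∧ ∀ y : E, ‖y‖ ≤ 1 → f y ≤ f x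

theorem IsSupReflexive.isJamesBoundary (hE : IsSupReflexive E) :
    IsJamesBoundary_s17 (NormedSpace.inclusionInDoubleDual ℝ E '' Metric.closedBall 0 1) := by
  constructor
  · rintro _ ⟨x, hx, rfl⟩
    exact (NormedSpace.double_dual_bound ℝ E x).trans (mem_closedBall_zero_iff.1 hx)
  · intro f
    obtain ⟨x, hx, hmax⟩ := hE f
    refine ⟨_, mem_image_of_mem _ (mem_closedBall_zero_iff.2 hx), le_antisymm ?_ ?_⟩
    · exact (le_abs_self _).trans (f.unit_le_opNorm x hx)
    · refine f.opNorm_le_of_unit_norm (by simpa using hmax 0 (by simp)) fun y hy => ?_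
      have hneg := hmax (-y) (by rw [norm_neg]; exact hy.le)
      rw [map_neg] at hneg
      exact abs_le.2 ⟨neg_le.1 hneg, hmax y hy.le⟩

theorem IsSupReflexive.zero_mem_closure_convexHull (hE : IsSupReflexive E)
    {g : ℕ → StrongDual ℝ E} (hg : Bornology.IsBounded (range g))
    (hg0 : ∀ x, Tendsto (fun n => g n x) atTop (𝓝 0)) : 0 ∈ closure (convexHull ℝ (range g)) := by
  rw [← closedConvexHull_eq_closure_convexHull, ← isClosed_closedConvexHull.closure_eq,
    Metric.mem_closure_iff]
  intro ε hε
  obtain ⟨h, hh, hlt⟩ := simons_inequality hE.isJamesBoundary hg (c := ε / 2)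
    (by rintro _ ⟨x, -, rfl⟩; exact (hg0 x).eventually_le_const (half_pos hε)) (half_lt_self hε)
  exact ⟨h, hh, by rwa [dist_zero_left]⟩

end SupReflexive

section Rosenthal

open Set Topology

theorem exists_infinite_subset_forall {ι : Type*} [Countable ι] [Nonempty ι]
    {Q : ι → Set ℕ → Prop} {M₀ : Set ℕ} (hM₀ : M₀.Infinite)
    (hmono : ∀ i M L, (L \ M).Finite → Q i M → Q i L)
    (hex : ∀ i, ∀ M ⊆ M₀, M.Infinite → ∃ L ⊆ M, L.Infinite ∧ Q i L) :
    ∃ L ⊆ M₀, L.Infinite ∧ ∀ i, Q i L := by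
  obtain ⟨e, he⟩ := exists_surjective_nat ι
  choose! next hsub hinf hQ using hex
  let M : ℕ → Set ℕ := fun n => Nat.rec M₀ (fun n L => next (e n) L) n
  have hM (n : ℕ) : M n ⊆ M₀ ∧ (M n).Infinite := by
    induction n with
    | zero => exact ⟨subset_rfl, hM₀⟩
    | succ n ih => exact ⟨(hsub _ _ ih.1 ih.2).trans ih.1, hinf _ _ ih.1 ih.2⟩
  have hanti : Antitone M := antitone_nat_of_succ_le fun n => hsub _ _ (hM n).1 (hM n).2
  obtain ⟨φ, hφ, hφM⟩ := extraction_forall_of_frequently (P := fun n k => k ∈ M n)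
    fun n => Nat.frequently_atTop_iff_infinite.2 (hM n).2
  have halmost (n : ℕ) : (range φ \ M n).Finite := by
    refine ((finite_Iio n).image φ).subset ?_
    rintro _ ⟨⟨k, rfl⟩, hk⟩
    exact mem_image_of_mem φ (lt_of_not_ge fun hnk => hk (hanti hnk (hφM k)))
  refine ⟨range φ, range_subset_iff.2 fun n => (hM n).1 (hφM n),
    infinite_range_of_injective hφ.injective, he.forall.2 fun n => ?_⟩
  exact hmono _ _ _ (halmost (n + 1)) (hQ _ _ (hM n).1 (hM n).2)

variable {X : Type*}

/-- The pairs `S true n`, `S false n` converge on `Y` along `L`: no point of `Y` visits both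
members of the pairs infinitely often while `n` runs through `L`. -/
def PairsConvergeOn (S : Bool → ℕ → Set X) (Y : Set X) (L : Set ℕ) : Prop :=
  ∀ x ∈ Y, ∃ b, {n ∈ L | x ∈ S b n}.Finite

/-- The pairs oscillate hereditarily: no infinite subset of `M` makes them converge on `Y`. This is
the invariant kept while a Boolean independent subsequence is extracted. -/
def PairsOscillateOn (S : Bool → ℕ → Set X) (Y : Set X) (M : Set ℕ) : Prop :=
  ∀ L ⊆ M, L.Infinite → ¬ PairsConvergeOn S Y L

/-- Boolean independence of a sequence of pairs: every finite choice of one member from each pair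
has a common point. -/
def BoolIndependent (S : Bool → ℕ → Set X) : Prop :=
  ∀ (σ : ℕ → Bool) (s : Finset ℕ), ∃ x, ∀ i ∈ s, x ∈ S (σ i) i

theorem PairsConvergeOn.of_diff_finite {S : Bool → ℕ → Set X} {Y : Set X} {L M : Set ℕ}
    (h : PairsConvergeOn S Y M) (hLM : (L \ M).Finite) : PairsConvergeOn S Y L := by
  intro x hx
  obtain ⟨b, hb⟩ := h x hx
  refine ⟨b, (hb.union hLM).subset fun n hn => ?_⟩
  by_cases hnM : n ∈ M
  · exact .inl ⟨hnM, hn.2⟩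
  · exact .inr ⟨hn.1, hnM⟩

theorem PairsOscillateOn.nonempty {S : Bool → ℕ → Set X} {Y : Set X} {M : Set ℕ}
    (h : PairsOscillateOn S Y M) (hM : M.Infinite) : Y.Nonempty := by
  by_contra hY
  rw [not_nonempty_iff_eq_empty] at hY
  exact h M subset_rfl hM (by simp [PairsConvergeOn, hY])

theorem pairsConvergeOn_of_forall_inter {S : Bool → ℕ → Set X} {Y : Set X} {L : Set ℕ} {b : Bool}
    (h : ∀ n ∈ L, PairsConvergeOn S (Y ∩ S b n) L) : PairsConvergeOn S Y L := by
  intro x hx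
  by_cases hvisit : ∃ n ∈ L, x ∈ S b n
  · obtain ⟨n, hn, hxn⟩ := hvisit
    exact h n hn x ⟨hx, hxn⟩
  · push Not at hvisit
    exact ⟨b, finite_empty.subset fun n hn => hvisit n hn.1 hn.2⟩

theorem exists_infinite_subset_constant {α : Type*} [Finite α] {L : Set ℕ} (hL : L.Infinite)
    (c : ℕ → α) : ∃ a, {n ∈ L | c n = a}.Infinite := by
  by_contra! hfin
  exact hL ((finite_iUnion hfin).subset fun n hn => mem_iUnion.2 ⟨c n, hn, rfl⟩)

theorem exists_pairsOscillateOn_inter {S : Bool → ℕ → Set X} {T : Set (Set X)} (hT : T.Finite)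
    {M : Set ℕ} (hM : M.Infinite) (hosc : ∀ Y ∈ T, PairsOscillateOn S Y M) :
    ∃ j, ∃ M' ⊆ M, M'.Infinite ∧ ∀ Y ∈ T, ∀ b, PairsOscillateOn S (Y ∩ S b j) M' := by
  by_contra! hcon
  have hrefine (j : ℕ) (M' : Set ℕ) (hM' : M' ⊆ M) (hinf : M'.Infinite) :
      ∃ L ⊆ M', L.Infinite ∧ ∃ p : T × Bool, PairsConvergeOn S (p.1 ∩ S p.2 j) L := by
    obtain ⟨Y, hY, b, hconv⟩ := hcon j M' hM' hinf
    simp only [PairsOscillateOn, not_forall, not_not] at hconv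
    obtain ⟨L, hLM, hL, hconv⟩ := hconv
    exact ⟨L, hLM, hL, (⟨Y, hY⟩, b), hconv⟩
  obtain ⟨L, hLM, hL, hconv⟩ := exists_infinite_subset_forall hM
    (fun j M L hLM ⟨p, hp⟩ => ⟨p, hp.of_diff_finite hLM⟩) hrefine
  choose p hp using hconv
  have := hT.to_subtype
  obtain ⟨⟨⟨Y, hY⟩, b⟩, hinf⟩ := exists_infinite_subset_constant hL p
  refine hosc Y hY _ ((sep_subset L _).trans hLM) hinf <|
    pairsConvergeOn_of_forall_inter (b := b) fun n hn => ?_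
  have hn' := hp n
  rw [hn.2] at hn'
  exact hn'.of_diff_finite (by simp [sdiff_eq_empty.2 (sep_subset L _)])

theorem exists_forall_prefix_nonempty {S : Bool → ℕ → Set X} {M : Set ℕ} (hM : M.Infinite)
    (hosc : PairsOscillateOn S univ M) :
    ∃ j : ℕ → ℕ, ∀ (σ : ℕ → Bool) (N : ℕ), ∃ x, ∀ i < N, x ∈ S (σ i) (j i) := by
  let State := {p : Set (Set X) × Set ℕ //
    p.1.Finite ∧ p.2.Infinite ∧ ∀ Y ∈ p.1, PairsOscillateOn S Y p.2}
  have hstep (p : State) : ∃ (j : ℕ) (q : State), ∀ Y ∈ p.1.1, ∀ b, Y ∩ S b j ∈ q.1.1 := by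
    obtain ⟨⟨T, M⟩, hT, hM, hosc⟩ := p
    obtain ⟨j, M', -, hM', hosc'⟩ := exists_pairsOscillateOn_inter hT hM hosc
    refine ⟨j, ⟨(⋃ b, (· ∩ S b j) '' T, M'), finite_iUnion fun b => hT.image _, hM', ?_⟩,
      fun Y hY b => mem_iUnion.2 ⟨b, Y, hY, rfl⟩⟩
    simp only [mem_iUnion]
    rintro _ ⟨b, Y, hY, rfl⟩
    exact hosc' Y hY b
  choose j next hnext using hstep
  let start : State := ⟨({univ}, M), finite_singleton _, hM, by rintro _ rfl; exact hosc⟩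
  let p : ℕ → State := fun n => Nat.rec start (fun _ => next) n
  have hmem (σ : ℕ → Bool) (N : ℕ) : (⋂ i ∈ Iio N, S (σ i) (j (p i))) ∈ (p N).1.1 := by
    induction N with
    | zero => simp [p, start]
    | succ N ih =>
      rw [← Order.succ_eq_add_one, Order.Iio_succ_eq_insert, biInter_insert, inter_comm]
      exact hnext (p N) _ ih (σ N)
  refine ⟨fun n => j (p n), fun σ N => ?_⟩
  obtain ⟨x, hx⟩ := ((p N).2.2.2 _ (hmem σ N)).nonempty (p N).2.2.1
  exact ⟨x, mem_iInter₂.1 hx⟩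

theorem PairsOscillateOn.exists_boolIndependent {S : Bool → ℕ → Set X} {M : Set ℕ}
    (hosc : PairsOscillateOn S univ M) (hM : M.Infinite) :
    ∃ j : ℕ → ℕ, BoolIndependent fun b i => S b (j i) := by
  obtain ⟨j, hj⟩ := exists_forall_prefix_nonempty hM hosc
  refine ⟨j, fun σ s => ?_⟩
  obtain ⟨x, hx⟩ := hj σ (s.sup id + 1)
  exact ⟨x, fun i hi => hx i (Nat.lt_succ_of_le (s.le_sup (f := id) hi))⟩

/-- The superlevel sets `{f n > s}` paired with the sublevel sets `{f n < r}`. -/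
def levelPair (f : ℕ → X → ℝ) (r s : ℝ) : Bool → ℕ → Set X
  | true, n => {x | s < f n x}
  | false, n => {x | f n x < r}

theorem exists_tendsto_of_pairsConvergeOn {f : ℕ → X → ℝ}
    (hf : ∀ x, Bornology.IsBounded (range fun n => f n x)) {L : Set ℕ} (hL : L.Infinite)
    (hconv : ∀ r s : ℚ, r < s → PairsConvergeOn (levelPair f r s) univ L) :
    ∃ φ : ℕ → ℕ, StrictMono φ ∧ ∀ x, ∃ c, Tendsto (fun n => f (φ n) x) atTop (𝓝 c) := by
  obtain ⟨φ, hφ, hφL⟩ := extraction_of_frequently_atTop (P := (· ∈ L))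
    (Nat.frequently_atTop_iff_infinite.2 hL)
  refine ⟨φ, hφ, fun x => ?_⟩
  obtain ⟨C, hC⟩ := isBounded_iff_forall_norm_le.1 (hf x)
  have hbdd (n : ℕ) : |f (φ n) x| ≤ C := hC _ (mem_range_self (φ n))
  refine tendsto_of_no_upcrossings (s := range ((↑) : ℚ → ℝ)) Rat.denseRange_cast ?_
    (isBoundedUnder_of ⟨C, fun n => (abs_le.1 (hbdd n)).2⟩)
    (isBoundedUnder_of ⟨-C, fun n => (abs_le.1 (hbdd n)).1⟩)
  rintro _ ⟨r, rfl⟩ _ ⟨s, rfl⟩ hrs ⟨hlow, hhigh⟩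
  obtain ⟨b, hb⟩ := hconv r s (Rat.cast_lt.1 hrs) x (mem_univ x)
  have hvisits : {n | x ∈ levelPair f r s b (φ n)}.Infinite := by
    cases b
    · exact Nat.frequently_atTop_iff_infinite.1 hlow
    · exact Nat.frequently_atTop_iff_infinite.1 hhigh
  refine hvisits.image hφ.injective.injOn (hb.subset ?_)
  rintro _ ⟨n, hn, rfl⟩
  exact ⟨hφL n, hn⟩

theorem exists_tendsto_subseq_or_boolIndependent {f : ℕ → X → ℝ}
    (hf : ∀ x, Bornology.IsBounded (range fun n => f n x)) :
    (∃ φ : ℕ → ℕ, StrictMono φ ∧ ∀ x, ∃ c, Tendsto (fun n => f (φ n) x) atTop (𝓝 c)) ∨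
      ∃ (j : ℕ → ℕ) (r s : ℝ), r < s ∧ BoolIndependent (levelPair (fun i => f (j i)) r s) := by
  by_cases hosc : ∃ r s : ℚ, r < s ∧
      ∃ M : Set ℕ, M.Infinite ∧ PairsOscillateOn (levelPair f r s) univ M
  · obtain ⟨r, s, hrs, M, hM, hosc⟩ := hosc
    obtain ⟨j, hj⟩ := hosc.exists_boolIndependent hM
    refine .inr ⟨j, r, s, Rat.cast_lt.2 hrs, ?_⟩
    convert hj using 3 with b i
    cases b <;> rfl
  · left
    simp only [PairsOscillateOn] at hosc
    push Not at hosc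
    have : Nonempty {p : ℚ × ℚ // p.1 < p.2} := ⟨⟨(0, 1), one_pos⟩⟩
    obtain ⟨L, -, hL, hconv⟩ := exists_infinite_subset_forall infinite_univ
      (Q := fun (p : {p : ℚ × ℚ // p.1 < p.2}) => PairsConvergeOn (levelPair f p.1.1 p.1.2) univ)
      (fun p M L hLM h => h.of_diff_finite hLM) fun p M _ hM => hosc _ _ p.2 M hM
    exact exists_tendsto_of_pairsConvergeOn hf hL fun r s hrs => hconv ⟨(r, s), hrs⟩

end Rosenthal

section LowerL1

open Set Topology

variable {E : Type*} [NormedAddCommGroup E] [NormedSpace ℝ E]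

/-- The lower `ℓ¹`-estimate with constant `δ`; for a bounded sequence and `δ > 0` it says that
`f` is equivalent to the unit vector basis of `ℓ¹`. -/
def HasLowerL1Estimate {ι : Type*} (δ : ℝ) (f : ι → E) : Prop :=
  ∀ (s : Finset ι) (c : ι → ℝ), δ * ∑ i ∈ s, |c i| ≤ ‖∑ i ∈ s, c i • f i‖

theorem HasLowerL1Estimate.le_norm_of_mem_convexHull {ι : Type*} {δ : ℝ} {f : ι → E}
    (hf : HasLowerL1Estimate δ f) {σ : ι → ℝ} (hσ : ∀ i, |σ i| = 1) {h : E}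
    (hh : h ∈ convexHull ℝ (range fun i => σ i • f i)) : δ ≤ ‖h‖ := by
  rw [convexHull_range_eq_exists_affineCombination] at hh
  obtain ⟨s, w, hw, hw1, rfl⟩ := hh
  rw [s.affineCombination_eq_linear_combination _ w hw1]
  have habs : ∑ i ∈ s, |w i * σ i| = 1 := hw1 ▸ Finset.sum_congr rfl fun i hi => by
    rw [abs_mul, hσ, mul_one, abs_of_nonneg (hw i hi)]
  calc δ = δ * ∑ i ∈ s, |w i * σ i| := by rw [habs, mul_one]
    _ ≤ ‖∑ i ∈ s, (w i * σ i) • f i‖ := hf s _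
    _ = _ := by simp only [mul_smul]

theorem hasLowerL1Estimate_of_boolIndependent {f : ℕ → StrongDual ℝ E} {r s : ℝ}
    (hf : BoolIndependent (levelPair (fun n (x : Metric.closedBall (0 : E) 1) => f n x) r s)) :
    HasLowerL1Estimate ((s - r) / 2) f := by
  intro t c
  let σ (i : ℕ) : Bool := decide (0 ≤ c i)
  obtain ⟨⟨x, hx⟩, hxσ⟩ := hf σ t
  obtain ⟨⟨y, hy⟩, hyσ⟩ := hf (fun i => !σ i) t
  rw [mem_closedBall_zero_iff] at hx hy
  have hterm (i : ℕ) (hi : i ∈ t) : (s - r) * |c i| ≤ c i * f i (x - y) := by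
    have hxi := hxσ i hi
    have hyi := hyσ i hi
    rw [map_sub]
    rcases le_or_gt 0 (c i) with hc | hc
    · simp only [σ, hc, decide_true, Bool.not_true, levelPair, mem_ofPred_eq] at hxi hyi
      rw [abs_of_nonneg hc, mul_comm]
      gcongr
    · simp only [σ, hc.not_ge, decide_false, Bool.not_false, levelPair, mem_ofPred_eq] at hxi hyi
      rw [abs_of_neg hc]
      nlinarith
  have hxy : ‖x - y‖ ≤ 2 := (norm_sub_le x y).trans (by linarith)
  have : (s - r) * ∑ i ∈ t, |c i| ≤ ‖∑ i ∈ t, c i • f i‖ * 2 := by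
    calc (s - r) * ∑ i ∈ t, |c i| ≤ ∑ i ∈ t, c i * f i (x - y) := by
          rw [Finset.mul_sum]
          exact Finset.sum_le_sum hterm
      _ = (∑ i ∈ t, c i • f i) (x - y) := by simp
      _ ≤ ‖(∑ i ∈ t, c i • f i) (x - y)‖ := le_abs_self _
      _ ≤ ‖∑ i ∈ t, c i • f i‖ * 2 := ContinuousLinearMap.le_opNorm_of_le _ hxy
  linarith

theorem exists_tendsto_of_forall_mem_closedBall {f : ℕ → StrongDual ℝ E}
    (hf : ∀ x ∈ Metric.closedBall (0 : E) 1, ∃ c, Tendsto (fun n => f n x) atTop (𝓝 c)) (x : E) :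
    ∃ c, Tendsto (fun n => f n x) atTop (𝓝 c) := by
  have hpos : 0 < ‖x‖ + 1 := by positivity
  have hmem : (‖x‖ + 1)⁻¹ • x ∈ Metric.closedBall (0 : E) 1 := by
    rw [mem_closedBall_zero_iff, norm_smul, norm_inv, Real.norm_of_nonneg hpos.le,
      inv_mul_le_one₀ hpos]
    linarith
  obtain ⟨c, hc⟩ := hf _ hmem
  refine ⟨(‖x‖ + 1) * c, (hc.const_mul (‖x‖ + 1)).congr fun n => ?_⟩
  rw [map_smul, smul_eq_mul, mul_inv_cancel_left₀ hpos.ne']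

theorem rosenthal_l1 {f : ℕ → StrongDual ℝ E} (hf : Bornology.IsBounded (range f)) :
    (∃ φ : ℕ → ℕ, StrictMono φ ∧ ∀ x, ∃ c, Tendsto (fun n => f (φ n) x) atTop (𝓝 c)) ∨
      ∃ (j : ℕ → ℕ) (δ : ℝ), 0 < δ ∧ HasLowerL1Estimate δ fun i => f (j i) := by
  have hbdd (x : Metric.closedBall (0 : E) 1) : Bornology.IsBounded (range fun n => f n x) := by
    have := (ContinuousLinearMap.apply ℝ ℝ (x : E)).lipschitz.isBounded_image hf
    rwa [← range_comp] at this
  rcases exists_tendsto_subseq_or_boolIndependent hbdd with ⟨φ, hφ, hlim⟩ | ⟨j, r, s, hrs, hind⟩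
  · exact .inl ⟨φ, hφ, exists_tendsto_of_forall_mem_closedBall fun x hx => hlim ⟨x, hx⟩⟩
  · exact .inr ⟨j, (s - r) / 2, half_pos (sub_pos.2 hrs),
      hasLowerL1Estimate_of_boolIndependent hind⟩

end LowerL1

section Separation

open Set Pointwise

variable {E : Type*} [NormedAddCommGroup E] [NormedSpace ℝ E]

theorem exists_norm_le_one_forall_le_apply_s17 {K : Set E} (hK : Convex ℝ K) {ϑ : ℝ} (hϑ : 0 < ϑ)
    (hKϑ : ∀ x ∈ K, ϑ ≤ ‖x‖) : ∃ f : StrongDual ℝ E, ‖f‖ ≤ 1 ∧ ∀ x ∈ K, ϑ ≤ f x := by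
  have hdisj : Disjoint (Metric.ball (0 : E) ϑ) K :=
    disjoint_left.2 fun x hx hxK => (mem_ball_zero_iff.1 hx).not_ge (hKϑ x hxK)
  obtain ⟨f, c, hball, hfK⟩ :=
    geometric_hahn_banach_open (convex_ball (0 : E) ϑ) Metric.isOpen_ball hK hdisj
  have hc : 0 < c := by simpa using hball 0 (Metric.mem_ball_self hϑ)
  have hclosedBall (x : E) (hx : x ∈ Metric.closedBall 0 ϑ) : f x ≤ c := by
    rw [← closure_ball (0 : E) hϑ.ne'] at hx
    exact le_on_closure (fun y hy => (hball y hy).le) f.continuous.continuousOn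
      continuousOn_const hx
  have hnorm : ‖f‖ ≤ c / ϑ := by
    refine f.opNorm_bound_of_ball_bound hϑ c fun x hx => abs_le.2 ⟨?_, hclosedBall x hx⟩
    have := hclosedBall (-x) (by simpa using hx)
    rw [map_neg] at this
    exact neg_le.1 this
  refine ⟨(ϑ / c) • f, ?_, fun x hx => ?_⟩
  · calc ‖(ϑ / c) • f‖ ≤ ϑ / c * (c / ϑ) := by
          rw [norm_smul, Real.norm_of_nonneg (by positivity)]
          gcongr
      _ = 1 := by field_simp
  · calc ϑ = ϑ / c * c := by field_simp
      _ ≤ ((ϑ / c) • f) x := mul_le_mul_of_nonneg_left (hfK x hx) (by positivity)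

theorem exists_norm_le_one_eq_zero_on_submodule {V : Submodule ℝ E} {K : Set E}
    (hK : Convex ℝ K) (hne : K.Nonempty) {ϑ : ℝ} (hϑ : 0 < ϑ)
    (hdist : ∀ x ∈ V, ∀ y ∈ K, ϑ ≤ ‖x - y‖) :
    ∃ f : StrongDual ℝ E, ‖f‖ ≤ 1 ∧ (∀ x ∈ V, f x = 0) ∧ ∀ y ∈ K, ϑ ≤ f y := by
  obtain ⟨f, hf, hfKV⟩ :=
    exists_norm_le_one_forall_le_apply_s17 (K := K + (V : Set E)) (hK.add V.convex) hϑ <| by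
      rintro _ ⟨y, hy, x, hx, rfl⟩
      have := hdist (-x) (V.neg_mem hx) y hy
      rwa [← norm_neg, neg_sub, sub_neg_eq_add] at this
  refine ⟨f, hf, fun x hx => ?_, fun y hy => by simpa using hfKV _ (add_mem_add hy V.zero_mem)⟩
  obtain ⟨y, hy⟩ := hne
  by_contra hfx
  have := hfKV _ (add_mem_add hy (V.smul_mem (-(f y) / f x) hx))
  rw [map_add, map_smul, smul_eq_mul, div_mul_cancel₀ _ hfx] at this
  linarith

theorem exists_functionals_of_separated_sequence {a : ℕ → E} {ϑ : ℝ} (hϑ : 0 < ϑ)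
    (ha : ∀ n, ∀ x ∈ Submodule.span ℝ (a '' {i | i < n}),
      ∀ y ∈ convexHull ℝ (a '' {i | n ≤ i}), ϑ ≤ ‖x - y‖) :
    ∃ f : ℕ → StrongDual ℝ E, (∀ n, ‖f n‖ ≤ 1) ∧ (∀ n, ∀ i < n, f n (a i) = 0) ∧
      ∀ n, ∀ i ≥ n, ϑ ≤ f n (a i) := by
  choose f hf hspan hhull using fun n =>
    exists_norm_le_one_eq_zero_on_submodule (convex_convexHull ℝ (a '' {i | n ≤ i}))
      ⟨a n, subset_convexHull ℝ _ ⟨n, le_refl n, rfl⟩⟩ hϑ (ha n)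
  exact ⟨f, hf, fun n i hi => hspan n _ (Submodule.subset_span ⟨i, hi, rfl⟩),
    fun n i hi => hhull n _ (subset_convexHull ℝ _ ⟨i, hi, rfl⟩)⟩

end Separation

section Alternatives

open Set Topology

variable {E : Type*} [NormedAddCommGroup E] [NormedSpace ℝ E]

theorem le_norm_of_mem_convexHull_of_eventually_le {ι : Type*} {l : Filter ι} [l.NeBot]
    {z : ι → E} (hz : ∀ i, ‖z i‖ ≤ 1) {G : Set (StrongDual ℝ E)} {θ : ℝ}
    (hG : ∀ g ∈ G, ∀ᶠ i in l, θ ≤ g (z i)) {h : StrongDual ℝ E} (hh : h ∈ convexHull ℝ G) :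
    θ ≤ ‖h‖ := by
  have hconv : Convex ℝ {w : StrongDual ℝ E | ∀ᶠ i in l, θ ≤ w (z i)} := by
    intro v hv w hw s t hs ht hst
    filter_upwards [hv, hw] with i hvi hwi
    exact (convex_Ici θ) hvi hwi hs ht hst
  have hmem : ∀ᶠ i in l, θ ≤ h (z i) := convexHull_min hG hconv hh
  obtain ⟨i, hi⟩ := hmem.exists
  exact hi.trans ((le_abs_self _).trans (h.unit_le_opNorm _ (hz i)))

theorem exists_limit_functional {g : ℕ → StrongDual ℝ E} (hg : Bornology.IsBounded (range g))
    (hlim : ∀ x, ∃ c, Tendsto (fun n => g n x) atTop (𝓝 c)) :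
    ∃ ψ : StrongDual ℝ E, ∀ x, Tendsto (fun n => g n x) atTop (𝓝 (ψ x)) := by
  choose ψ hψ using hlim
  exact ⟨.ofTendstoOfBoundedRange ψ g (tendsto_pi_nhds.2 hψ) hg, hψ⟩

theorem IsSupReflexive.not_eventually_le_of_tendsto_zero (hE : IsSupReflexive E)
    {g : ℕ → StrongDual ℝ E} (hg : Bornology.IsBounded (range g))
    (hlim : ∀ x, ∃ c, Tendsto (fun n => g n x) atTop (𝓝 c)) {a : ℕ → E} (ha : ∀ i, ‖a i‖ ≤ 1)
    (hga : ∀ i, Tendsto (fun n => g n (a i)) atTop (𝓝 0)) {θ : ℝ} (hθ : 0 < θ) :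
    ¬ ∀ n, ∀ᶠ i in atTop, θ ≤ g n (a i) := by
  intro hle
  obtain ⟨ψ, hψ⟩ := exists_limit_functional hg hlim
  have hψa (i : ℕ) : ψ (a i) = 0 := tendsto_nhds_unique (hψ (a i)) (hga i)
  have hbdd : Bornology.IsBounded (range fun n => g n - ψ) :=
    (hg.sub (Bornology.isBounded_singleton (x := ψ))).subset <|
      range_subset_iff.2 fun n => sub_mem_sub (mem_range_self n) rfl
  have hzero := hE.zero_mem_closure_convexHull hbdd fun x => by
    simpa using (hψ x).sub_const (ψ x)
  obtain ⟨h, hh, hlt⟩ := Metric.mem_closure_iff.1 hzero θ hθ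
  rw [dist_zero_left] at hlt
  refine hlt.not_ge (le_norm_of_mem_convexHull_of_eventually_le (l := atTop) ha ?_ hh)
  rintro _ ⟨n, rfl⟩
  simpa [hψa] using hle n

theorem exists_abs_eq_one_forall_abs_mul_eq {ι : Type*} {F : ℕ → Finset ι}
    (hF : Pairwise fun m n => Disjoint (F m) (F n)) (c : ι → ℝ) :
    ∃ σ : ι → ℝ, (∀ i, |σ i| = 1) ∧ ∀ n, ∀ i ∈ F n, |c i| * σ i = (-1) ^ n * c i := by
  have hsign (x : ℝ) : ∃ s : ℝ, |s| = 1 ∧ |x| * s = x := by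
    rcases le_total 0 x with hx | hx
    · exact ⟨1, abs_one, by rw [abs_of_nonneg hx, mul_one]⟩
    · exact ⟨-1, by simp, by rw [abs_of_nonpos hx, neg_mul_neg, mul_one]⟩
  suffices h : ∀ i, ∃ s : ℝ, |s| = 1 ∧ ∀ n, i ∈ F n → |c i| * s = (-1) ^ n * c i by
    choose σ hσ hcσ using h
    exact ⟨σ, hσ, fun n i => hcσ i n⟩
  intro i
  by_cases hi : ∃ n, i ∈ F n
  · obtain ⟨n, hn⟩ := hi
    obtain ⟨s, hs, hcs⟩ := hsign ((-1) ^ n * c i)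
    rw [abs_mul, abs_neg_one_pow, one_mul] at hcs
    refine ⟨s, hs, fun m hm => ?_⟩
    rwa [hF.eq (Finset.not_disjoint_iff.2 ⟨i, hm, hn⟩)]
  · exact ⟨1, abs_one, fun n hn => (hi ⟨n, hn⟩).elim⟩

-- The signs `σ`, chosen block by block, put every `(-1) ^ n • b n` into the convex hull of the
-- `σ i • f i`.
theorem IsSupReflexive.not_tendsto_blocks (hE : IsSupReflexive E) {f : ℕ → StrongDual ℝ E}
    (hf : Bornology.IsBounded (range f)) {δ : ℝ} (hδ : 0 < δ) (hfδ : HasLowerL1Estimate δ f)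
    {F : ℕ → Finset ℕ} (hF : Pairwise fun m n => Disjoint (F m) (F n)) {c : ℕ → ℝ}
    (hc : ∀ n, ∑ i ∈ F n, |c i| = 1) (φ : E → ℝ) :
    ¬ ∀ x, Tendsto (fun n => (∑ i ∈ F n, c i • f i) x) atTop (𝓝 (φ x)) := by
  intro hlim
  obtain ⟨σ, hσ, hcσ⟩ := exists_abs_eq_one_forall_abs_mul_eq hF c
  let H := convexHull ℝ (range fun i => σ i • f i)
  let b (n : ℕ) : StrongDual ℝ E := ∑ i ∈ F n, c i • f i
  have hblock (n : ℕ) : (-1 : ℝ) ^ n • b n ∈ H := by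
    have : (-1 : ℝ) ^ n • b n = ∑ i ∈ F n, |c i| • σ i • f i := by
      simp only [b, Finset.smul_sum, smul_smul]
      exact Finset.sum_congr rfl fun i hi => by rw [hcσ n i hi]
    rw [this]
    exact (convex_convexHull ℝ _).sum_mem (fun i _ => abs_nonneg _) (hc n)
      fun i _ => subset_convexHull ℝ _ (mem_range_self i)
  have hdiff (n : ℕ) : (1 / 2 : ℝ) • (b (2 * n) - b (2 * n + 1)) ∈ H := by
    convert (convex_convexHull ℝ _) (hblock (2 * n)) (hblock (2 * n + 1)) (a := 1 / 2)
      (b := 1 / 2) (by norm_num) (by norm_num) (by norm_num) using 1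
    rw [pow_succ, pow_mul, neg_one_sq, one_pow]
    module
  have hHbdd : Bornology.IsBounded H := by
    obtain ⟨C, hC⟩ := isBounded_iff_forall_norm_le.1 hf
    refine isBounded_convexHull.2 (isBounded_iff_forall_norm_le.2 ⟨C, ?_⟩)
    rintro _ ⟨i, rfl⟩
    simpa [norm_smul, hσ] using hC _ (mem_range_self i)
  have hdiffH := range_subset_iff.2 hdiff
  have hzero := hE.zero_mem_closure_convexHull (hHbdd.subset hdiffH) fun x => by
    have heven := (hlim x).comp (tendsto_id.const_mul_atTop' two_pos)
    have hodd := (hlim x).comp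
      ((tendsto_add_atTop_nat 1).comp (tendsto_id.const_mul_atTop' two_pos))
    simpa [b] using (heven.sub hodd).const_mul (1 / 2 : ℝ)
  obtain ⟨h, hh, hlt⟩ := Metric.mem_closure_iff.1 hzero δ hδ
  rw [dist_zero_left] at hlt
  exact hlt.not_ge <| hfδ.le_norm_of_mem_convexHull hσ <|
    convexHull_min hdiffH (convex_convexHull ℝ _) hh

end Alternatives

/-- Theorem 1: a sup-reflexive normed space whose dual unit ball is weak-star block
compact is J-reflexive. -/
theorem supReflexive_blockCompact_J_reflexive {E : Type*}
    [NormedAddCommGroup E] [NormedSpace ℝ E]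
    (hsup : ∀ f : E →L[ℝ] ℝ, ∃ x : E, ‖x‖ ≤ 1 ∧ ∀ y : E, ‖y‖ ≤ 1 → f y ≤ f x)
    (hblockcompact : ∀ f : ℕ → E →L[ℝ] ℝ, (∀ n, ‖f n‖ ≤ 1) →
      ∃ (F : ℕ → Finset ℕ) (lam : ℕ → ℝ) (φ : E →L[ℝ] ℝ),
        (Pairwise fun m n => Disjoint (F m) (F n)) ∧
        (∀ n, ∑ i ∈ F n, |lam i| = 1) ∧
        (∀ x : E, Tendsto (fun n => (∑ i ∈ F n, lam i • f i) x) atTop (nhds (φ x)))) :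
    ¬ ∃ (a : ℕ → E) (ϑ : ℝ), 0 < ϑ ∧ (∀ n, ‖a n‖ ≤ 1) ∧
      ∀ n : ℕ, ∀ x ∈ (Submodule.span ℝ (a '' {i | i < n}) : Set E),
        ∀ y ∈ convexHull ℝ (a '' {i | n ≤ i}), ϑ ≤ ‖x - y‖ := by
  rintro ⟨a, ϑ, hϑ, ha, hsep⟩
  have hE : IsSupReflexive E := hsup
  obtain ⟨f, hf, hf_zero, hf_le⟩ := exists_functionals_of_separated_sequence hϑ hsep
  have hbdd (j : ℕ → ℕ) : Bornology.IsBounded (Set.range fun n => f (j n)) :=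
    isBounded_iff_forall_norm_le.2 ⟨1, by rintro _ ⟨n, rfl⟩; exact hf (j n)⟩
  rcases rosenthal_l1 (hbdd id) with ⟨φ, hφ, hlim⟩ | ⟨j, δ, hδ, hl1⟩
  · have hzero (i : ℕ) : Tendsto (fun n => f (φ n) (a i)) atTop (nhds 0) :=
      tendsto_const_nhds.congr' <| (hφ.tendsto_atTop.eventually_gt_atTop i).mono
        fun n hn => (hf_zero (φ n) i hn).symm
    exact hE.not_eventually_le_of_tendsto_zero (hbdd φ) hlim ha hzero hϑ
      fun n => (eventually_ge_atTop (φ n)).mono (hf_le (φ n))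
  · obtain ⟨F, c, φ, hF, hc, hlim⟩ := hblockcompact (fun i => f (j i)) fun i => hf (j i)
    exact hE.not_tendsto_blocks (hbdd j) hδ hl1 hF hc φ hlim
end

section
/- Every normed space E in which every continuous linear functional attains its supremum on the closed unit ball is J-reflexive: the closed unit ball contains no sequence (a_n) with inf_n distance(span{a_i : i < n}, conv{a_i : i ≥ n}) > 0. (Assume Hahn–Banach and Dependent Choices.) -/
open Filter

open Topology

/-!
Suppose `(aₙ)` violates J-reflexivity. Hahn–Banach gives bounded functionals `fₙ` with `fₙ(aᵢ) = 0`
for `i < n` and `fₙ(aᵢ) ≥ 1` for `i ≥ n`. Any functional `w` lying pointwise below `limsup fₙ`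
vanishes at every `aᵢ`, so it has distance at least `1` from the convex hull of the `fₙ`.

On the other hand, Pryce's diagonal argument passes to a subsequence for which all such `w` have the
same distance to each point of the closed span of the `fₙ`. James' construction then selects
`gₙ ∈ conv {fₖ : k ≥ n}` greedily, so that the partial sums of `F = ∑ 2⁻⁽ᵏ⁺¹⁾ gₖ`, completed by the
weight `2⁻ⁿ` at `gₙ`, nearly minimise the distance to `w`. At a point `x` where `F - w` attains its
norm this greediness forces `gₙ(x)` to converge to a limit not much smaller than `F(x)`. If `w` lies
below `limsup gₙ`, that limit is `w(x)`, so `‖F - w‖ = (F - w)(x)` is small and `w` is in the closed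
convex hull of the `fₙ`.
-/

section Diagonal

theorem exists_tendsto_forall_map {α ι : Type*} [Countable ι] {P : ι → Filter α → Prop}
    (hanti : ∀ i, Antitone (P i))
    (hrefine : ∀ (i : ι) (L : Filter α), L.NeBot → L.IsCountablyGenerated →
      ∃ L' ≤ L, L'.NeBot ∧ L'.IsCountablyGenerated ∧ P i L')
    (L : Filter α) [L.NeBot] [L.IsCountablyGenerated] :
    ∃ φ : ℕ → α, Tendsto φ atTop L ∧ ∀ i, P i (map φ atTop) := by
  cases isEmpty_or_nonempty ι with
  | inl h =>
    obtain ⟨φ, hφ⟩ := exists_seq_tendsto L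
    exact ⟨φ, hφ, isEmptyElim⟩
  | inr h =>
    obtain ⟨e, he⟩ := exists_surjective_nat ι
    choose! R hR_le hR_neBot hR_cg hR_P using hrefine
    let K : ℕ → Filter α := fun n => Nat.rec L (fun k => R (e k)) n
    have hK : ∀ n, (K n).NeBot ∧ (K n).IsCountablyGenerated := fun n => by
      induction n with
      | zero => exact ⟨‹_›, ‹_›⟩
      | succ n ih => exact ⟨hR_neBot _ _ ih.1 ih.2, hR_cg _ _ ih.1 ih.2⟩
    have hK_anti : Antitone K :=
      antitone_nat_of_succ_le fun n => hR_le _ _ (hK n).1 (hK n).2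
    have : (iInf K).NeBot :=
      iInf_neBot_of_directed' hK_anti.directed_ge fun n => (hK n).1
    have : ∀ n, (K n).IsCountablyGenerated := fun n => (hK n).2
    obtain ⟨φ, hφ⟩ := exists_seq_tendsto (iInf K)
    refine ⟨φ, hφ.mono_right (iInf_le K 0), fun i => ?_⟩
    obtain ⟨n, rfl⟩ := he i
    exact hanti _ (hφ.trans (iInf_le K (n + 1))) (hR_P _ _ (hK n).1 (hK n).2)

end Diagonal

section DyadicTail

theorem sum_dyadic_add_mem {V : Type*} [AddCommGroup V] [Module ℝ V] {K : Set V}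
    (hK : Convex ℝ K) {g : ℕ → V} (hg : ∀ k, g k ∈ K) {v : V} (hv : v ∈ K) (N : ℕ) :
    ∑ k ∈ Finset.range N, (1 / 2 : ℝ) ^ (k + 1) • g k + (1 / 2 : ℝ) ^ N • v ∈ K := by
  induction N generalizing v with
  | zero => simpa using hv
  | succ N ih =>
    convert! ih (hK (hg N) hv (a := 1 / 2) (b := 1 / 2) (by norm_num) (by norm_num) (by norm_num))
      using 1
    rw [Finset.sum_range_succ, pow_succ]
    module

variable {X : Type*} [NormedAddCommGroup X] [NormedSpace ℝ X]

/-- The dyadically weighted mean `∑ₖ 2⁻⁽ᵏ⁺¹⁾ gₙ₊ₖ` of the terms of `g` from index `n` on. It is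
the limiting convex combination in James' construction. -/
noncomputable def dyadicTail (g : ℕ → X) (n : ℕ) : X :=
  ∑' k, (1 / 2 : ℝ) ^ (k + 1) • g (k + n)

variable [CompleteSpace X] {g : ℕ → X} {M : ℝ}

theorem summable_dyadicTail (hg : ∀ n, ‖g n‖ ≤ M) (n : ℕ) :
    Summable fun k => (1 / 2 : ℝ) ^ (k + 1) • g (k + n) := by
  refine .of_norm_bounded (((summable_nat_add_iff 1).2 summable_geometric_two).mul_right M)
    fun k => ?_
  rw [norm_smul, Real.norm_of_nonneg (by positivity)]
  gcongr
  exact hg _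

theorem add_dyadicTail_succ (hg : ∀ n, ‖g n‖ ≤ M) (n : ℕ) :
    g n + dyadicTail g (n + 1) = (2 : ℝ) • dyadicTail g n := by
  have htail : (1 / 2 : ℝ) • dyadicTail g (n + 1)
      = ∑' k, (1 / 2 : ℝ) ^ (k + 1 + 1) • g (k + 1 + n) := by
    simp only [dyadicTail, ← tsum_const_smul'', smul_smul, ← pow_succ', add_assoc, add_comm 1 n]
  rw [dyadicTail.eq_def g n, (summable_dyadicTail hg n).tsum_eq_zero_add, ← htail, zero_add,
    zero_add]
  module

theorem dyadicTail_zero_eq_sum_add (hg : ∀ n, ‖g n‖ ≤ M) (n : ℕ) :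
    dyadicTail g 0 = ∑ k ∈ Finset.range n, (1 / 2 : ℝ) ^ (k + 1) • g k
      + (1 / 2 : ℝ) ^ n • dyadicTail g n := by
  induction n with
  | zero => simp
  | succ n ih =>
    have hsplit : dyadicTail g n = (1 / 2 : ℝ) • (g n + dyadicTail g (n + 1)) := by
      rw [add_dyadicTail_succ hg, smul_smul]
      norm_num
    rw [ih, Finset.sum_range_succ, hsplit, pow_succ]
    module

theorem dyadicTail_mem_closure {K : Set X} (hK : Convex ℝ K) (hg : ∀ n, ‖g n‖ ≤ M) {n : ℕ}
    (hgK : ∀ k, g (k + n) ∈ K) : dyadicTail g n ∈ closure K := by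
  have hweight : Tendsto (fun N : ℕ => (1 / 2 : ℝ) ^ N • g n) atTop (𝓝 0) := by
    simpa using (tendsto_pow_atTop_nhds_zero_of_lt_one (r := (1 / 2 : ℝ)) (by norm_num)
      (by norm_num)).smul_const (g n)
  have hlim := (summable_dyadicTail hg n).hasSum.tendsto_sum_nat.add hweight
  rw [add_zero] at hlim
  have hgn : g n ∈ K := by simpa using hgK 0
  exact mem_closure_of_tendsto hlim (.of_forall (sum_dyadic_add_mem hK hgK hgn))

end DyadicTail

section GreedySequence

theorem exists_mem_forall_le_add {α : Type*} {C : Set α} (hC : C.Nonempty) {q : α → ℝ}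
    (hq : BddBelow (q '' C)) {ε : ℝ} (hε : 0 < ε) : ∃ g ∈ C, ∀ u ∈ C, q g ≤ q u + ε := by
  obtain ⟨_, ⟨g, hg, rfl⟩, hlt⟩ := Real.lt_sInf_add_pos (hC.image q) hε
  refine ⟨g, hg, fun u hu => hlt.le.trans ?_⟩
  gcongr
  exact csInf_le hq (Set.mem_image_of_mem q hu)

theorem exists_greedy_seq {V : Type*} [AddCommGroup V] [Module ℝ V] {C : ℕ → Set V} {q : V → ℝ}
    {ε : ℕ → ℝ} (hC : ∀ n, (C n).Nonempty) (hq : BddBelow (Set.range q)) (hε : ∀ n, 0 < ε n) :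
    ∃ g : ℕ → V, (∀ n, g n ∈ C n) ∧ ∀ n, ∀ u ∈ C n,
      q (∑ k ∈ Finset.range n, (1 / 2 : ℝ) ^ (k + 1) • g k + (1 / 2 : ℝ) ^ n • g n) ≤
        q (∑ k ∈ Finset.range n, (1 / 2 : ℝ) ^ (k + 1) • g k + (1 / 2 : ℝ) ^ n • u) + ε n := by
  choose G hGC hGmin using fun (n : ℕ) (s : V) =>
    exists_mem_forall_le_add (hC n) (q := fun u => q (s + (1 / 2 : ℝ) ^ n • u))
      (hq.mono (by rintro _ ⟨u, -, rfl⟩; exact Set.mem_range_self _)) (hε n)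
  let s : ℕ → V := fun n => Nat.rec 0 (fun k σ => σ + (1 / 2 : ℝ) ^ (k + 1) • G k σ) n
  have hs : ∀ n, s n = ∑ k ∈ Finset.range n, (1 / 2 : ℝ) ^ (k + 1) • G k (s k) := fun n => by
    induction n with
    | zero => rfl
    | succ n ih => rw [Finset.sum_range_succ, ← ih]
  refine ⟨fun n => G n (s n), fun n => hGC n _, fun n => ?_⟩
  rw [← hs]
  exact hGmin n (s n)

theorem exists_greedy_dyadicTail {X : Type*} [NormedAddCommGroup X] [NormedSpace ℝ X]
    [CompleteSpace X] {C : ℕ → Set X} {q : X → ℝ} {ε : ℕ → ℝ} {M : ℝ} (hC_ne : ∀ n, (C n).Nonempty)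
    (hC_convex : ∀ n, Convex ℝ (C n)) (hC_anti : Antitone C) (hCM : ∀ u ∈ C 0, ‖u‖ ≤ M)
    (hq : Continuous q) (hq_bdd : BddBelow (Set.range q)) (hε : ∀ n, 0 < ε n) :
    ∃ g : ℕ → X, (∀ n, g n ∈ C n) ∧ (∀ n, dyadicTail g n ∈ closure (C n)) ∧
      ∀ n, q (dyadicTail g 0 + (1 / 2 : ℝ) ^ n • (g n - dyadicTail g n)) ≤
        q (dyadicTail g 0) + ε n := by
  obtain ⟨g, hgC, hgmin⟩ := exists_greedy_seq hC_ne hq_bdd hε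
  have hgM : ∀ n, ‖g n‖ ≤ M := fun n => hCM _ (hC_anti n.zero_le (hgC n))
  have htail : ∀ n, dyadicTail g n ∈ closure (C n) := fun n =>
    dyadicTail_mem_closure (hC_convex n) hgM fun k => hC_anti (Nat.le_add_left n k) (hgC _)
  refine ⟨g, hgC, htail, fun n => ?_⟩
  have hmin := le_on_closure (hgmin n) (by fun_prop) (by fun_prop) (htail n)
  rw [← dyadicTail_zero_eq_sum_add hgM] at hmin
  have hsum : dyadicTail g 0 + (1 / 2 : ℝ) ^ n • (g n - dyadicTail g n)
      = ∑ k ∈ Finset.range n, (1 / 2 : ℝ) ^ (k + 1) • g k + (1 / 2 : ℝ) ^ n • g n := by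
    rw [dyadicTail_zero_eq_sum_add hgM n]
    module
  rwa [hsum]

end GreedySequence

theorem exists_tendsto_of_le_add_dyadic {u v : ℕ → ℝ} {δ : ℝ} (hu : BddAbove (Set.range u))
    (hδ : 0 ≤ δ) (hrec : ∀ n, v n + u (n + 1) = 2 * u n)
    (hle : ∀ n, v n ≤ u n + δ * (1 / 2) ^ (n + 1)) :
    ∃ R, u 0 - δ ≤ R ∧ Tendsto v atTop (𝓝 R) := by
  let b : ℕ → ℝ := fun n => u n - δ * (1 / 2) ^ n
  have hb_mono : Monotone b := monotone_nat_of_le_succ fun n => by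
    linarith [hrec n, hle n, show b n = u n - 2 * (δ * (1 / 2) ^ (n + 1)) by simp only [b]; ring,
      show b (n + 1) = u (n + 1) - δ * (1 / 2) ^ (n + 1) from rfl]
  have hb_bdd : BddAbove (Set.range b) := by
    obtain ⟨M, hM⟩ := hu
    refine ⟨M, Set.forall_mem_range.2 fun n => (sub_le_self _ (by positivity)).trans ?_⟩
    exact hM (Set.mem_range_self n)
  have hb := tendsto_atTop_ciSup hb_mono hb_bdd
  have hpow : Tendsto (fun n : ℕ => δ * (1 / 2) ^ n) atTop (𝓝 0) := by
    simpa using (tendsto_pow_atTop_nhds_zero_of_lt_one (r := (1 / 2 : ℝ)) (by norm_num)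
      (by norm_num)).const_mul δ
  have hu_lim : Tendsto u atTop (𝓝 (⨆ n, b n)) := by simpa [b] using hb.add hpow
  refine ⟨⨆ n, b n, by simpa [b] using le_ciSup hb_bdd 0, ?_⟩
  have hv : v = fun n => 2 * u n - u (n + 1) := funext fun n => eq_sub_of_add_eq (hrec n)
  rw [hv]
  convert (hu_lim.const_mul 2).sub ((tendsto_add_atTop_iff_nat 1).2 hu_lim) using 2
  ring

section Functionals

variable {E : Type*} [NormedAddCommGroup E] [NormedSpace ℝ E]

theorem exists_lt_apply_of_lt_norm {φ : StrongDual ℝ E} {r : ℝ} (hr : r < ‖φ‖) :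
    ∃ x, ‖x‖ ≤ 1 ∧ r < φ x := by
  obtain ⟨x, hx, hrx⟩ := φ.exists_lt_apply_of_lt_opNorm hr
  rcases lt_abs.1 hrx with h | h
  · exact ⟨x, hx.le, h⟩
  · exact ⟨-x, (norm_neg x).trans_le hx.le, by rwa [map_neg]⟩

theorem apply_le_norm {φ : StrongDual ℝ E} {x : E} (hx : ‖x‖ ≤ 1) : φ x ≤ ‖φ‖ :=
  (le_abs_self _).trans (φ.unit_le_opNorm x hx)

theorem apply_le_of_norm_add_smul_le {φ ψ : StrongDual ℝ E} {x : E} (hx : ‖x‖ ≤ 1)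
    (hφx : φ x = ‖φ‖) {t η : ℝ} (ht : 0 < t) (h : ‖φ + t • ψ‖ ≤ ‖φ‖ + t * η) : ψ x ≤ η := by
  have hsum : φ x + t * ψ x ≤ ‖φ‖ + t * η := (apply_le_norm (φ := φ + t • ψ) hx).trans h
  rw [hφx] at hsum
  exact le_of_mul_le_mul_left (le_of_add_le_add_left hsum) ht

open scoped Pointwise in
theorem exists_dual_eq_zero_of_le_norm_sub {S : Submodule ℝ E} {C : Set E} (hC : Convex ℝ C)
    (hC_ne : C.Nonempty) {θ : ℝ} (hθ : 0 < θ) (h : ∀ x ∈ S, ∀ y ∈ C, θ ≤ ‖x - y‖) :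
    ∃ f : StrongDual ℝ E, ‖f‖ ≤ θ⁻¹ ∧ (∀ x ∈ S, f x = 0) ∧ ∀ y ∈ C, 1 ≤ f y := by
  have hdisj : Disjoint (Metric.ball 0 θ) (C - (S : Set E)) := by
    rw [Set.disjoint_left]
    rintro _ hz ⟨y, hy, x, hx, rfl⟩
    rw [mem_ball_zero_iff, norm_sub_rev] at hz
    exact (h x hx y hy).not_gt hz
  obtain ⟨f, u, hf_ball, hf_diff⟩ := geometric_hahn_banach_open (convex_ball (0 : E) θ)
    Metric.isOpen_ball (hC.sub S.convex) hdisj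
  have hu : 0 < u := by simpa using hf_ball 0 (Metric.mem_ball_self hθ)
  have hf_sub : ∀ y ∈ C, ∀ x ∈ S, u ≤ f y - f x := fun y hy x hx => by
    simpa using hf_diff _ (Set.sub_mem_sub hy hx)
  have hf_S : ∀ x ∈ S, f x = 0 := fun x hx => by
    obtain ⟨y, hy⟩ := hC_ne
    by_contra hne
    have := hf_sub y hy ((f y / f x) • x) (S.smul_mem _ hx)
    rw [map_smul, smul_eq_mul, div_mul_cancel₀ _ hne, sub_self] at this
    exact this.not_gt hu
  refine ⟨u⁻¹ • f, ?_, fun x hx => by simp [hf_S x hx], fun y hy => ?_⟩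
  · rw [← mem_closedBall_zero_iff, ← NormedSpace.polar_ball hθ]
    refine NormedSpace.smul_mem_polar fun z hz => ?_
    have hneg := hf_ball (-z) (by simpa using hz)
    rw [map_neg] at hneg
    rw [Real.norm_eq_abs, Real.norm_of_nonneg hu.le, abs_le]
    exact ⟨(neg_lt.1 hneg).le, (hf_ball z hz).le⟩
  · have := hf_sub y hy 0 S.zero_mem
    rw [map_zero, sub_zero] at this
    rwa [_root_.smul_apply, smul_eq_mul, inv_mul_eq_div, one_le_div hu]

/-- A real normed space is *sup-reflexive* if every continuous linear functional attains its
supremum over the closed unit ball. -/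
def SupReflexive (E : Type*) [NormedAddCommGroup E] [NormedSpace ℝ E] : Prop :=
  ∀ f : StrongDual ℝ E, ∃ x, ‖x‖ ≤ 1 ∧ ∀ y, ‖y‖ ≤ 1 → f y ≤ f x

theorem SupReflexive.exists_apply_eq_norm (hE : SupReflexive E) (f : StrongDual ℝ E) :
    ∃ x, ‖x‖ ≤ 1 ∧ f x = ‖f‖ := by
  obtain ⟨x, hx, hmax⟩ := hE f
  refine ⟨x, hx, (apply_le_norm hx).antisymm (le_of_not_gt fun hlt => ?_)⟩
  obtain ⟨y, hy, hlt⟩ := exists_lt_apply_of_lt_norm hlt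
  exact (hmax y hy).not_gt hlt

end Functionals

section KnoppCore

variable {E : Type*} [NormedAddCommGroup E] [NormedSpace ℝ E] {α : Type*}

/-- The functionals lying pointwise below `limsup f` along `L`; by linearity they also lie above
`liminf f`. This is the analogue for functionals of the Knopp core of a real sequence. The
inequality with the upper limit is spelled out through eventual upper bounds, so that no
boundedness is needed for it to be meaningful. -/
def knoppCore (f : α → StrongDual ℝ E) (L : Filter α) : Set (StrongDual ℝ E) :=
  {w | ∀ x c, (∀ᶠ a in L, f a x ≤ c) → w x ≤ c}

variable {f : α → StrongDual ℝ E} {L : Filter α} {w : StrongDual ℝ E}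

theorem le_apply_of_mem_knoppCore (hw : w ∈ knoppCore f L) {x : E} {c : ℝ}
    (h : ∀ᶠ a in L, c ≤ f a x) : c ≤ w x := by
  simpa using hw (-x) (-c) (by simpa using h)

theorem apply_eq_of_mem_knoppCore_of_tendsto (hw : w ∈ knoppCore f L) {x : E} {r : ℝ}
    (h : Tendsto (fun a => f a x) L (𝓝 r)) : w x = r := by
  refine le_antisymm (le_of_forall_gt_imp_ge_of_dense fun c hc => ?_)
    (le_of_forall_lt_imp_le_of_dense fun c hc => ?_)
  · exact hw x c (h.eventually_le_const hc)
  · exact le_apply_of_mem_knoppCore hw (h.eventually_const_le hc)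

theorem knoppCore_antitone (f : α → StrongDual ℝ E) {L L' : Filter α} (h : L' ≤ L) :
    knoppCore f L' ⊆ knoppCore f L :=
  fun _ hw x c hc => hw x c (hc.filter_mono h)

theorem norm_le_of_mem_knoppCore {M : ℝ} (hf : ∀ a, ‖f a‖ ≤ M) (hw : w ∈ knoppCore f L) :
    ‖w‖ ≤ M := by
  refine le_of_not_gt fun hlt => ?_
  obtain ⟨x, hx, hlt⟩ := exists_lt_apply_of_lt_norm hlt
  exact (hw x M (.of_forall fun a => (apply_le_norm hx).trans (hf a))).not_gt hlt

theorem knoppCore_nonempty {M : ℝ} (hf : ∀ a, ‖f a‖ ≤ M) (L : Filter α) [L.NeBot] :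
    (knoppCore f L).Nonempty := by
  obtain ⟨w, -, hw⟩ := (WeakDual.isCompact_closedBall (𝕜 := ℝ) (E := E) 0 M).ultrafilter_le_nhds
    ((Ultrafilter.of L).map fun a => StrongDual.toWeakDual (f a))
    (tendsto_principal.2 (.of_forall fun a => by simpa using hf a))
  refine ⟨WeakDual.toStrongDual w, fun x c hc => ?_⟩
  exact le_of_tendsto (((WeakDual.eval_continuous x).tendsto w).comp hw)
    (hc.filter_mono (Ultrafilter.of_le L))

theorem knoppCore_subset_of_mem_convexHull_tail {f g : ℕ → StrongDual ℝ E}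
    (hg : ∀ n, g n ∈ convexHull ℝ (f '' Set.Ici n)) :
    knoppCore g atTop ⊆ knoppCore f atTop := by
  intro w hw x c hc
  obtain ⟨N, hN⟩ := eventually_atTop.1 hc
  refine hw x c (eventually_atTop.2 ⟨N, fun n hn => ?_⟩)
  have hhalf : Convex ℝ {φ : StrongDual ℝ E | φ x ≤ c} :=
    convex_halfSpace_le (f := fun φ : StrongDual ℝ E => φ x)
      ⟨fun _ _ => rfl, fun _ _ => rfl⟩ c
  refine convexHull_min ?_ hhalf (hg n)
  rintro _ ⟨k, hk, rfl⟩
  exact hN k (hn.trans hk)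

theorem le_norm_sub_of_mem_knoppCore {a : ℕ → E} (ha : ∀ i, ‖a i‖ ≤ 1) {r : ℝ}
    (hf_zero : ∀ i, ∀ᶠ n in L, f n (a i) = 0) (hf_ge : ∀ n, ∀ᶠ i in atTop, r ≤ f n (a i))
    (hw : w ∈ knoppCore f L) {φ : StrongDual ℝ E} (hφ : φ ∈ convexHull ℝ (Set.range f)) :
    r ≤ ‖φ - w‖ := by
  have hconv : Convex ℝ {φ : StrongDual ℝ E | ∀ᶠ i in atTop, r ≤ φ (a i)} := by
    intro φ hφ ψ hψ s t hs ht hst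
    filter_upwards [hφ, hψ] with i hi hi'
    exact (convex_Ici r) hi hi' hs ht hst
  have hsub : Set.range f ⊆ {φ | ∀ᶠ i in atTop, r ≤ φ (a i)} := Set.range_subset_iff.2 hf_ge
  have hφ_ge : ∀ᶠ i in atTop, r ≤ φ (a i) := convexHull_min hsub hconv hφ
  obtain ⟨i, hi⟩ := hφ_ge.exists
  have hwi : w (a i) = 0 :=
    apply_eq_of_mem_knoppCore_of_tendsto hw (EventuallyEq.tendsto (hf_zero i))
  calc r ≤ (φ - w) (a i) := by rwa [_root_.sub_apply, hwi, sub_zero]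
    _ ≤ ‖φ - w‖ := apply_le_norm (ha i)

theorem exists_filter_dist_knoppCore_le_add {M : ℝ} (hf : ∀ a, ‖f a‖ ≤ M) (d : StrongDual ℝ E)
    {ε : ℝ} (hε : 0 < ε) (L : Filter α) [L.NeBot] [L.IsCountablyGenerated] :
    ∃ L' ≤ L, L'.NeBot ∧ L'.IsCountablyGenerated ∧
      ∀ w ∈ knoppCore f L', ∀ w' ∈ knoppCore f L', dist d w ≤ dist d w' + ε := by
  have hbdd : BddAbove (dist d '' knoppCore f L) := by
    refine ⟨‖d‖ + M, ?_⟩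
    rintro _ ⟨w, hw, rfl⟩
    exact (dist_le_norm_add_norm d w).trans (by gcongr; exact norm_le_of_mem_knoppCore hf hw)
  obtain ⟨_, ⟨w, hw, rfl⟩, hlt⟩ :=
    Real.add_neg_lt_sSup ((knoppCore_nonempty hf L).image (dist d)) (neg_lt_zero.2 hε)
  rw [dist_eq_norm] at hlt
  obtain ⟨x, hx, hlt⟩ := exists_lt_apply_of_lt_norm hlt
  set s := sSup (dist d '' knoppCore f L)
  -- On a filter where `f a x ≤ d x - (s - ε)`, the point `x` alone witnesses that every element of
  -- the core has distance at least `s - ε` from `d`.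
  have hfreq : ∃ᶠ a in L, f a x ≤ d x - (s - ε) := by
    intro hev
    have hle : d x - (s - ε) ≤ w x :=
      le_apply_of_mem_knoppCore hw (hev.mono fun a ha => (not_le.1 ha).le)
    rw [_root_.sub_apply] at hlt
    linarith
  refine ⟨L ⊓ 𝓟 {a | f a x ≤ d x - (s - ε)}, inf_le_left, frequently_mem_iff_neBot.1 hfreq,
    inferInstance, fun w₁ hw₁ w₂ hw₂ => ?_⟩
  have hw₁_le : dist d w₁ ≤ s :=
    le_csSup hbdd (Set.mem_image_of_mem _ (knoppCore_antitone f inf_le_left hw₁))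
  have hw₂_le : w₂ x ≤ d x - (s - ε) := hw₂ x _ (mem_inf_of_right (mem_principal_self _))
  have hw₂_norm : d x - w₂ x ≤ dist d w₂ := dist_eq_norm d w₂ ▸ apply_le_norm (φ := d - w₂) hx
  linarith

theorem exists_tendsto_dist_knoppCore_eq {M : ℝ} (hf : ∀ a, ‖f a‖ ≤ M) {T : Set (StrongDual ℝ E)}
    (hT : TopologicalSpace.IsSeparable T) (L : Filter α) [L.NeBot] [L.IsCountablyGenerated] :
    ∃ φ : ℕ → α, Tendsto φ atTop L ∧ ∀ d ∈ T, ∀ w ∈ knoppCore (f ∘ φ) atTop,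
      ∀ w' ∈ knoppCore (f ∘ φ) atTop, dist d w = dist d w' := by
  obtain ⟨D, hD, hTD⟩ := hT
  have := hD.to_subtype
  obtain ⟨φ, hφ, hclose⟩ := exists_tendsto_forall_map (ι := D × ℕ)
    (P := fun i L => ∀ w ∈ knoppCore f L, ∀ w' ∈ knoppCore f L,
      dist i.1.1 w ≤ dist i.1.1 w' + 1 / (i.2 + 1))
    (fun i L L' hL h w hw w' hw' =>
      h w (knoppCore_antitone f hL hw) w' (knoppCore_antitone f hL hw'))
    (fun i L _ _ => exists_filter_dist_knoppCore_le_add hf i.1 Nat.one_div_pos_of_nat L) L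
  have hle : ∀ d ∈ D, ∀ w ∈ knoppCore (f ∘ φ) atTop, ∀ w' ∈ knoppCore (f ∘ φ) atTop,
      dist d w ≤ dist d w' := fun d hd w hw w' hw' => by
    refine le_of_forall_pos_le_add fun ε hε => ?_
    obtain ⟨n, hn⟩ := exists_nat_one_div_lt hε
    exact (hclose (⟨d, hd⟩, n) w hw w' hw').trans (by gcongr)
  refine ⟨φ, hφ, fun d hd w hw w' hw' => ?_⟩
  have hclosed : IsClosed {d | dist d w = dist d w'} := isClosed_eq (by fun_prop) (by fun_prop)
  exact hclosed.closure_subset_iff.2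
    (fun d hd => (hle d hd w hw w' hw').antisymm (hle d hd w' hw' w hw)) (hTD hd)

end KnoppCore

section JamesConstruction

variable {E : Type*} [NormedAddCommGroup E] [NormedSpace ℝ E] {M δ : ℝ}

theorem SupReflexive.dist_dyadicTail_le (hE : SupReflexive E) {g : ℕ → StrongDual ℝ E}
    (hgM : ∀ n, ‖g n‖ ≤ M) {w : StrongDual ℝ E} (hw : w ∈ knoppCore g atTop) (hδ : 0 ≤ δ)
    (hmin : ∀ n, dist (dyadicTail g 0 + (1 / 2 : ℝ) ^ n • (g n - dyadicTail g n)) w ≤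
      dist (dyadicTail g 0) w + (1 / 2) ^ n * (δ * (1 / 2) ^ (n + 1))) :
    dist (dyadicTail g 0) w ≤ δ := by
  obtain ⟨x, hx, hx_norm⟩ := hE.exists_apply_eq_norm (dyadicTail g 0 - w)
  have hle : ∀ n, g n x ≤ dyadicTail g n x + δ * (1 / 2) ^ (n + 1) := fun n => by
    have hstep := hmin n
    rw [dist_eq_norm, dist_eq_norm, add_sub_right_comm] at hstep
    have := apply_le_of_norm_add_smul_le hx hx_norm (by positivity) hstep
    rw [_root_.sub_apply] at this
    linarith
  have hbdd : BddAbove (Set.range fun n => dyadicTail g n x) := by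
    refine ⟨M, Set.forall_mem_range.2 fun n => (apply_le_norm hx).trans ?_⟩
    have hmem := dyadicTail_mem_closure (convex_closedBall (0 : StrongDual ℝ E) M) hgM (n := n)
      fun k => mem_closedBall_zero_iff.2 (hgM _)
    rwa [Metric.isClosed_closedBall.closure_eq, mem_closedBall_zero_iff] at hmem
  have hrec : ∀ n, g n x + dyadicTail g (n + 1) x = 2 * dyadicTail g n x := fun n =>
    congrArg (fun φ : StrongDual ℝ E => φ x) (add_dyadicTail_succ hgM n)
  obtain ⟨R, hR, hlim⟩ := exists_tendsto_of_le_add_dyadic hbdd hδ hrec hle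
  rw [dist_eq_norm, ← hx_norm, _root_.sub_apply, apply_eq_of_mem_knoppCore_of_tendsto hw hlim]
  exact sub_le_comm.1 hR

variable {f : ℕ → StrongDual ℝ E}

theorem SupReflexive.exists_mem_closure_convexHull_dist_le (hE : SupReflexive E)
    (hf : ∀ n, ‖f n‖ ≤ M)
    (hdist : ∀ d ∈ closure (Submodule.span ℝ (Set.range f) : Set (StrongDual ℝ E)),
      ∀ w ∈ knoppCore f atTop, ∀ w' ∈ knoppCore f atTop, dist d w = dist d w')
    {w₀ : StrongDual ℝ E} (hw₀ : w₀ ∈ knoppCore f atTop) (hδ : 0 < δ) :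
    ∃ F ∈ closure (convexHull ℝ (Set.range f)), dist F w₀ ≤ δ := by
  let C : ℕ → Set (StrongDual ℝ E) := fun n => convexHull ℝ (f '' Set.Ici n)
  have hC_anti : Antitone C := fun m n hmn =>
    convexHull_mono (Set.image_mono (Set.Ici_subset_Ici.2 hmn))
  have hC_range : ∀ n, C n ⊆ convexHull ℝ (Set.range f) := fun n =>
    convexHull_mono (Set.image_subset_range _ _)
  have hCM : ∀ φ ∈ convexHull ℝ (Set.range f), ‖φ‖ ≤ M := fun φ hφ =>
    mem_closedBall_zero_iff.1 (convexHull_min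
      (Set.range_subset_iff.2 fun n => mem_closedBall_zero_iff.2 (hf n))
      (convex_closedBall _ _) hφ)
  obtain ⟨g, hgC, hgtail, hgmin⟩ := exists_greedy_dyadicTail (q := (dist · w₀))
    (ε := fun n => (1 / 2) ^ n * (δ * (1 / 2) ^ (n + 1)))
    (fun n => ((Set.nonempty_Ici (a := n)).image f).convexHull) (fun n => convex_convexHull ℝ _)
    hC_anti (fun φ hφ => hCM φ (hC_range 0 hφ)) (by fun_prop)
    ⟨0, Set.forall_mem_range.2 fun _ => dist_nonneg⟩ (fun n => by positivity)
  have hgM : ∀ n, ‖g n‖ ≤ M := fun n => hCM _ (hC_range n (hgC n))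
  obtain ⟨w, hw⟩ := knoppCore_nonempty hgM atTop
  have hdist_w : ∀ d ∈ (Submodule.span ℝ (Set.range f)).topologicalClosure, dist d w₀ = dist d w :=
    fun d hd => hdist d hd w₀ hw₀ w (knoppCore_subset_of_mem_convexHull_tail hgC hw)
  have hC_span : ∀ n, closure (C n) ⊆ (Submodule.span ℝ (Set.range f)).topologicalClosure :=
    fun n => closure_mono ((hC_range n).trans
      (convexHull_min Submodule.subset_span (Submodule.convex _)))
  have htail_span := fun n => hC_span n (hgtail n)
  have hg_span := fun n => hC_span n (subset_closure (hgC n))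
  refine ⟨dyadicTail g 0, closure_mono (hC_range 0) (hgtail 0), ?_⟩
  rw [hdist_w _ (htail_span 0)]
  refine hE.dist_dyadicTail_le hgM hw hδ.le fun n => ?_
  have hperturb := Submodule.add_mem _ (htail_span 0)
    (Submodule.smul_mem _ ((1 / 2 : ℝ) ^ n) (Submodule.sub_mem _ (hg_span n) (htail_span n)))
  rw [← hdist_w _ (htail_span 0), ← hdist_w _ hperturb]
  exact hgmin n

theorem SupReflexive.exists_tendsto_knoppCore_subset (hE : SupReflexive E)
    (hf : ∀ n, ‖f n‖ ≤ M) :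
    ∃ φ : ℕ → ℕ, Tendsto φ atTop atTop ∧
      knoppCore (f ∘ φ) atTop ⊆ closure (convexHull ℝ (Set.range (f ∘ φ))) := by
  obtain ⟨φ, hφ, hdist⟩ := exists_tendsto_dist_knoppCore_eq hf
    ((Set.countable_range f).isSeparable.span (R := ℝ)).closure atTop
  refine ⟨φ, hφ, fun w hw => ?_⟩
  rw [← closure_closure, Metric.mem_closure_iff]
  intro ε hε
  obtain ⟨F, hF, hFw⟩ := hE.exists_mem_closure_convexHull_dist_le (fun n => hf (φ n))
    (fun d hd => hdist d (closure_mono (Submodule.span_mono (Set.range_comp_subset_range φ f)) hd))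
    hw (half_pos hε)
  exact ⟨F, hF, dist_comm w F ▸ hFw.trans_lt (half_lt_self hε)⟩

end JamesConstruction

/-- James' sup theorem: every sup-reflexive normed space is J-reflexive. -/
theorem james_sup_theorem {E : Type*} [NormedAddCommGroup E] [NormedSpace ℝ E]
    (hsup : ∀ f : E →L[ℝ] ℝ, ∃ x : E, ‖x‖ ≤ 1 ∧ ∀ y : E, ‖y‖ ≤ 1 → f y ≤ f x) :
    ¬ ∃ (a : ℕ → E) (ϑ : ℝ), 0 < ϑ ∧ (∀ n, ‖a n‖ ≤ 1) ∧
      ∀ n : ℕ, ∀ x ∈ (Submodule.span ℝ (a '' {i | i < n}) : Set E),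
        ∀ y ∈ convexHull ℝ (a '' {i | n ≤ i}), ϑ ≤ ‖x - y‖ := by
  rintro ⟨a, θ, hθ, ha, hsep⟩
  choose f hf_norm hf_zero hf_ge using fun n => exists_dual_eq_zero_of_le_norm_sub
    (convex_convexHull ℝ (a '' {i | n ≤ i})) ⟨a n, subset_convexHull ℝ _ ⟨n, le_refl n, rfl⟩⟩ hθ
    (hsep n)
  obtain ⟨φ, hφ, hcore⟩ := SupReflexive.exists_tendsto_knoppCore_subset hsup hf_norm
  obtain ⟨w, hw⟩ := knoppCore_nonempty (fun n => hf_norm (φ n)) atTop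
  obtain ⟨d, hd, hwd⟩ := Metric.mem_closure_iff.1 (hcore hw) 1 one_pos
  rw [dist_comm, dist_eq_norm] at hwd
  refine hwd.not_ge (le_norm_sub_of_mem_knoppCore ha (fun i => ?_) (fun n => ?_) hw hd)
  · filter_upwards [hφ.eventually (eventually_gt_atTop i)] with n hn
    exact hf_zero _ _ (Submodule.subset_span ⟨i, hn, rfl⟩)
  · filter_upwards [eventually_ge_atTop (φ n)] with i hi
    exact hf_ge _ _ (subset_convexHull ℝ _ ⟨i, hi, rfl⟩)
end
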